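/- arXiv:1703.02444 — 3 statements merged into one kernel-verified Lean document; each statement's English description precedes it below -/
import Mathlib

section
/- Let m >= 3 and let A be any odd-cardinality subset of the edge set of the cycle C_m. Then the 2m-dimensional Lebesgue volume of the set of points of Q(C_m) that violate the odd cycle inequality OC(A) equals 1 / (2 * (2m)!). -/
open MeasureTheory Filter

noncomputable section

/-- The standard relaxation `Q(G)` of the boolean quadric polytope of a graph `G`:
the set of points of `[0,1]^(V + E)` satisfying, for each edge `(i,j)`,
`0 ≤ y_{ij}`, `y_{ij} ≤ x_i`, `y_{ij} ≤ x_j` and `x_i + x_j ≤ 1 + y_{ij}`. -/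
def QSet {V : Type*} (G : SimpleGraph V) : Set ((V → ℝ) × (↥G.edgeSet → ℝ)) :=
  {p | (∀ i, p.1 i ∈ Set.Icc (0 : ℝ) 1) ∧ (∀ e, p.2 e ∈ Set.Icc (0 : ℝ) 1) ∧
    ∀ (i j : V) (h : G.Adj i j),
      0 ≤ p.2 ⟨s(i, j), (SimpleGraph.mem_edgeSet _).mpr h⟩ ∧
      p.2 ⟨s(i, j), (SimpleGraph.mem_edgeSet _).mpr h⟩ ≤ p.1 i ∧
      p.2 ⟨s(i, j), (SimpleGraph.mem_edgeSet _).mpr h⟩ ≤ p.1 j ∧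
      p.1 i + p.1 j ≤ 1 + p.2 ⟨s(i, j), (SimpleGraph.mem_edgeSet _).mpr h⟩}

/-- The cycle `C_m` with `m` vertices and (for `m ≥ 3`) `m` edges. -/
def cycleG (m : ℕ) : SimpleGraph (Fin m) :=
  SimpleGraph.fromRel (fun i j => ((i : ℕ) + 1) % m = (j : ℕ))

instance (m : ℕ) : DecidableRel (cycleG m).Adj := fun i j =>
  decidable_of_iff _ (SimpleGraph.fromRel_adj _ i j).symm

/-- The odd cycle inequality `OC(A)` for the cycle graph `C_m` and a subset `A` of its
edges: `∑_{i ∈ S₂} x_i - ∑_{i ∈ S₀} x_i + ∑_{e ∉ A} y_e - ∑_{e ∈ A} y_e ≤ ⌊|A|/2⌋`,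
where `S₂` (resp. `S₀`) is the set of vertices incident to exactly two (resp. zero)
edges of `A`. -/
def OC {m : ℕ} (A : Finset (cycleG m).edgeSet)
    (p : (Fin m → ℝ) × (↥(cycleG m).edgeSet → ℝ)) : Prop :=
  (∑ i ∈ Finset.univ.filter
      (fun i : Fin m =>
        (A.filter fun e : (cycleG m).edgeSet => i ∈ (e : Sym2 (Fin m))).card = 2), p.1 i)
  - (∑ i ∈ Finset.univ.filter
      (fun i : Fin m =>
        (A.filter fun e : (cycleG m).edgeSet => i ∈ (e : Sym2 (Fin m))).card = 0), p.1 i)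
  + (∑ e ∈ Aᶜ, p.2 e) - (∑ e ∈ A, p.2 e) ≤ ((A.card / 2 : ℕ) : ℝ)

theorem simplex_fin (n : ℕ) : ∀ c : ℝ, 0 < c →
    volume {x : Fin n → ℝ | (∀ i, 0 ≤ x i) ∧ ∑ i, x i < c} =
      ENNReal.ofReal (c ^ n / (Nat.factorial n : ℝ)) := by
  induction n with
  | zero =>
    intro c hc
    have : {x : Fin 0 → ℝ | (∀ i, 0 ≤ x i) ∧ ∑ i, x i < c} = Set.univ := by
      ext x; simp [hc]
    rw [this, volume_pi, Measure.pi_of_empty]; simp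
  | succ n ih =>
    intro c hc
    have hmp := (volume_preserving_piFinSuccAbove (fun _ : Fin (n + 1) => ℝ) 0).symm
    have hS : MeasurableSet {x : Fin (n+1) → ℝ | (∀ i, 0 ≤ x i) ∧ ∑ i, x i < c} := by
      measurability
    rw [← hmp.measure_preimage hS.nullMeasurableSet, Measure.volume_eq_prod,
      Measure.prod_apply (hmp.measurable hS)]
    have key : ∀ t : ℝ, volume (Prod.mk t ⁻¹'
        ((MeasurableEquiv.piFinSuccAbove (fun _ : Fin (n + 1) => ℝ) 0).symm ⁻¹'
          {x : Fin (n+1) → ℝ | (∀ i, 0 ≤ x i) ∧ ∑ i, x i < c})) =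
        (Set.Ico 0 c).indicator
          (fun t => ENNReal.ofReal ((c - t) ^ n / (Nat.factorial n : ℝ))) t := by
      intro t
      have h1 : (Prod.mk t ⁻¹'
        ((MeasurableEquiv.piFinSuccAbove (fun _ : Fin (n + 1) => ℝ) 0).symm ⁻¹'
          {x : Fin (n+1) → ℝ | (∀ i, 0 ≤ x i) ∧ ∑ i, x i < c})) =
          {x : Fin n → ℝ | 0 ≤ t ∧ (∀ i, 0 ≤ x i) ∧ ∑ i, x i < c - t} := by
        ext x
        simp only [Set.mem_preimage, Set.mem_ofPred_eq, MeasurableEquiv.piFinSuccAbove,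
          MeasurableEquiv.symm_mk, MeasurableEquiv.coe_mk, Fin.insertNthEquiv_zero]
        simp [Fin.forall_fin_succ, Fin.sum_univ_succ, Fin.consEquiv, lt_sub_iff_add_lt', and_assoc]
      rw [h1]
      by_cases ht : t ∈ Set.Ico 0 c
      · rw [Set.indicator_of_mem ht, ← ih (c - t) (by linarith [ht.2])]
        simp [ht.1]
      · rw [Set.indicator_of_notMem ht]
        convert measure_empty (μ := (volume : Measure (Fin n → ℝ)))
        ext x
        simp only [Set.mem_ofPred_eq, Set.mem_empty_iff_false, iff_false]
        rintro ⟨h0, hx, hs⟩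
        have := Finset.sum_nonneg (fun i (_ : i ∈ Finset.univ) => hx i)
        exact ht ⟨h0, by linarith⟩
    rw [lintegral_congr key, lintegral_indicator measurableSet_Ico,
      setLIntegral_congr Ico_ae_eq_Ioc,
      ← ofReal_integral_eq_lintegral_ofReal, ← intervalIntegral.integral_of_le hc.le]
    · congr 1
      rw [intervalIntegral.integral_div, intervalIntegral.integral_comp_sub_left (fun t => t ^ n)]
      simp [integral_pow, Nat.factorial_succ]
      field_simp
    · exact (Continuous.integrableOn_Icc (by fun_prop)).mono_set Set.Ioc_subset_Icc_self
    · refine (ae_restrict_iff' measurableSet_Ioc).2 (ae_of_all _ fun t ht => ?_)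
      have : 0 ≤ c - t := by linarith [ht.2]
      simp only [Pi.zero_apply]; positivity

theorem simplex_prod (m : ℕ) :
    volume {p : (Fin m → ℝ) × (Fin m → ℝ) | (∀ i, 0 ≤ p.1 i ∧ 0 ≤ p.2 i) ∧
      ∑ i, (p.1 i + p.2 i) < 1} = ENNReal.ofReal (1 / (Nat.factorial (2 * m) : ℝ)) := by
  have h1 := volume_measurePreserving_sumPiEquivProdPi_symm (fun _ : Fin m ⊕ Fin m => ℝ)
  have h2 := (volume_measurePreserving_piCongrLeft (fun _ : Fin (m + m) => ℝ)
    (finSumFinEquiv : Fin m ⊕ Fin m ≃ Fin (m + m)))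
  have h3 := simplex_fin (m + m) 1 one_pos
  have hS : MeasurableSet {x : Fin (m+m) → ℝ | (∀ i, 0 ≤ x i) ∧ ∑ i, x i < 1} := by
    measurability
  rw [← (h2.comp h1).measure_preimage hS.nullMeasurableSet] at h3
  rw [two_mul]
  rw [one_pow] at h3
  rw [← h3]
  congr 1
  ext p
  have e1 : ∀ i : Fin m, (MeasurableEquiv.piCongrLeft (fun _ : Fin (m + m) => ℝ) finSumFinEquiv)
      ((MeasurableEquiv.sumPiEquivProdPi (fun _ : Fin m ⊕ Fin m => ℝ)).symm p) (Fin.castAdd m i)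
      = p.1 i := fun i =>
    Equiv.piCongrLeft_apply_apply (fun _ : Fin (m + m) => ℝ) finSumFinEquiv _ (Sum.inl i)
  have e2 : ∀ i : Fin m, (MeasurableEquiv.piCongrLeft (fun _ : Fin (m + m) => ℝ) finSumFinEquiv)
      ((MeasurableEquiv.sumPiEquivProdPi (fun _ : Fin m ⊕ Fin m => ℝ)).symm p) (Fin.natAdd m i)
      = p.2 i := fun i =>
    Equiv.piCongrLeft_apply_apply (fun _ : Fin (m + m) => ℝ) finSumFinEquiv _ (Sum.inr i)
  simp only [Set.mem_ofPred_eq, Set.mem_preimage, Function.comp, Fin.sum_univ_add, e1, e2,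
    Finset.sum_add_distrib, forall_and]
  refine and_congr_left fun _ => ⟨fun h i => ?_, fun h => ⟨fun i => ?_, fun i => ?_⟩⟩
  · induction i using Fin.addCases with
    | left i => rw [e1]; exact h.1 i
    | right i => rw [e2]; exact h.2 i
  · rw [← e1]; exact h _
  · rw [← e2]; exact h _

def cycMat (n : ℕ) (s : Fin (n+1) → ℝ) : Matrix (Fin (n+1)) (Fin (n+1)) ℝ :=
  fun i j => (if j = i then 1 else 0) - (if j = i + 1 then s i else 0)

theorem det_cycMat (n : ℕ) (s : Fin (n+1+1) → ℝ) :
    (cycMat (n+1) s).det = 1 - ∏ i, s i := by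
  rw [Matrix.det_succ_column_zero, Fin.sum_univ_succ, Fin.sum_univ_castSucc,
    Finset.sum_eq_zero, Matrix.det_of_isUpperTriangular, Matrix.det_of_isLowerTriangular]
  · have h1 : ∀ i : Fin (n+1), cycMat (n+1) s (Fin.succ i) (Fin.succ i) = 1 := by
      intro i
      simp [cycMat]
    have h2 : ∀ i : Fin (n+1), cycMat (n+1) s (Fin.castSucc i) (Fin.succ i) = - s i.castSucc := by
      intro i
      have : i.succ ≠ i.castSucc := by simp [Fin.ext_iff]
      simp [cycMat, this]
    have h3 : cycMat (n+1) s (Fin.last (n+1)) 0 = - s (Fin.last (n+1)) := by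
      simp [cycMat, Fin.ext_iff]
    have h4 : cycMat (n+1) s 0 0 = 1 := by
      simp [cycMat]
    simp only [Matrix.submatrix_apply, Fin.succAbove_zero, h1, Fin.succ_last,
      Fin.succAbove_last, h2, h3, h4, Finset.prod_neg, Fin.prod_univ_castSucc s]
    simp
    have : ((-1:ℝ)^n) * (-1)^n = 1 := by rw [← mul_pow]; simp
    ring_nf
    rw [pow_mul']; simp
  · intro i j hij
    have hij : i < j := hij
    have h5 : j.succ ≠ i.castSucc + 1 := by
      simp; omega
    have h6 : j.succ ≠ i.castSucc := by
      simp [Fin.ext_iff]; omega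
    simp [cycMat, h5, h6]
    omega
  · intro i j hij
    have hij : j < i := hij
    have h5 : j.succ ≠ i.succ + 1 := by
      intro h
      rw [Fin.ext_iff, Fin.val_add_eq_ite] at h
      simp at h
      split_ifs at h <;> omega
    have h6 : j ≠ i := by omega
    simp [cycMat, h5, h6]
  · intro i _
    have h5 : (0 : Fin (n+1+1)) ≠ i.castSucc.succ + 1 := by
      intro h
      rw [Fin.ext_iff, Fin.val_add_eq_ite] at h
      simp at h
    have h6 : (0 : Fin (n+1+1)) ≠ i.castSucc.succ := by simp [Fin.ext_iff]
    simp only [cycMat, h5, h6]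
    simp

def aF {m : ℕ} [NeZero m] (B : Finset (Fin m)) (x y : Fin m → ℝ) (i : Fin m) : ℝ :=
  if i ∈ B then y i else x i - y i

def bF {m : ℕ} [NeZero m] (B : Finset (Fin m)) (x y : Fin m → ℝ) (i : Fin m) : ℝ :=
  if i ∈ B then 1 - x i - x (i + 1) + y i else x (i + 1) - y i

def simplexT (m : ℕ) : Set ((Fin m → ℝ) × (Fin m → ℝ)) :=
  {p | (∀ i, 0 ≤ p.1 i ∧ 0 ≤ p.2 i) ∧ ∑ i, (p.1 i + p.2 i) < 1}

theorem measurableSet_simplexT (m : ℕ) : MeasurableSet (simplexT m) := by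
  unfold simplexT
  measurability

theorem cut_volume (n : ℕ) (B : Finset (Fin (n+1+1))) (hB : Odd B.card) :
    volume {p : (Fin (n+1+1) → ℝ) × (Fin (n+1+1) → ℝ) |
      (aF B p.1 p.2, bF B p.1 p.2) ∈ simplexT (n+1+1)} =
    ENNReal.ofReal (1/2) * volume (simplexT (n+1+1)) := by
  set s : Fin (n+1+1) → ℝ := fun i => if i ∈ B then -1 else 1 with hs
  set c : Fin (n+1+1) → ℝ := fun i => if i ∈ B then 1 else 0 with hc
  have hdet : (cycMat (n+1) s).det = 2 := by
    rw [det_cycMat]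
    have : ∏ i, s i = -1 := by
      simp [hs, hB.neg_one_pow]
    rw [this]; norm_num
  set L : (Fin (n+1+1) → ℝ) →ₗ[ℝ] (Fin (n+1+1) → ℝ) := Matrix.toLin' (cycMat (n+1) s) with hL
  have hLdet : LinearMap.det L = 2 := by rw [hL, LinearMap.det_toLin', hdet]
  have hLx : ∀ x i, L x i = x i - s i * x (i + 1) := by
    intro x i
    simp [hL, Matrix.toLin'_apply, Matrix.mulVec, dotProduct, cycMat, sub_mul,
      Finset.sum_sub_distrib]
  have hbF : ∀ x y, bF B x y = c + aF B x y - L x := by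
    intro x y; ext i
    simp only [Pi.add_apply, Pi.sub_apply, hLx, bF, aF, hs, hc]
    split_ifs <;> ring
  have hLm : Measurable L := (LinearMap.continuous_of_finiteDimensional L).measurable
  -- first step
  have hskew : MeasurePreserving (fun p : (Fin (n+1+1) → ℝ) × (Fin (n+1+1) → ℝ) =>
      (id p.1, aF B p.1 p.2)) (volume.prod volume) (volume.prod volume) := by
    refine MeasurePreserving.skew_product (MeasurePreserving.id _) ?_ (ae_of_all _ fun x => ?_)
    · refine measurable_pi_lambda _ fun i => ?_
      unfold Function.uncurry aF
      split_ifs <;> fun_prop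
    · refine MeasurePreserving.map_eq ?_
      refine volume_preserving_pi (f := fun i t => if i ∈ B then t else x i - t) fun i => ?_
      split_ifs
      · exact MeasurePreserving.id _
      · exact Measure.measurePreserving_sub_left volume (x i)
  set U : Set ((Fin (n+1+1) → ℝ) × (Fin (n+1+1) → ℝ)) :=
    {q | (q.2, c + q.2 - L q.1) ∈ simplexT (n+1+1)} with hU
  have hUm : MeasurableSet U := by
    refine measurableSet_simplexT _ |>.preimage (f := fun q : (Fin (n+1+1) → ℝ) × (Fin (n+1+1) → ℝ) => (q.2, c + q.2 - L q.1)) ?_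
    fun_prop
  have h1 : {p : (Fin (n+1+1) → ℝ) × (Fin (n+1+1) → ℝ) |
      (aF B p.1 p.2, bF B p.1 p.2) ∈ simplexT (n+1+1)} = (fun p => (id p.1, aF B p.1 p.2)) ⁻¹' U := by
    ext p
    simp [hU, hbF]
  rw [h1, Measure.volume_eq_prod, hskew.measure_preimage hUm.nullMeasurableSet,
    Measure.prod_apply_symm hUm, Measure.prod_apply (measurableSet_simplexT _),
    ← lintegral_const_mul' _ _ ENNReal.ofReal_ne_top]
  refine lintegral_congr fun a => ?_
  have h2 : (fun x => (x, a)) ⁻¹' U =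
      L ⁻¹' ((fun d => (c + a) - d) ⁻¹' (Prod.mk a ⁻¹' simplexT (n+1+1))) := rfl
  rw [h2, Measure.addHaar_preimage_linearMap volume (by rw [hLdet]; norm_num), hLdet,
    (Measure.measurePreserving_sub_left volume (c + a)).measure_preimage
      (measurable_prodMk_left (measurableSet_simplexT _)).nullMeasurableSet]
  norm_num

theorem cyc_bound {m : ℕ} [NeZero m] (u s d t : Fin m → ℝ) (hs : ∀ i, s i = 1 ∨ s i = -1)
    (hprod : ∏ i, s i = -1) (hu : ∀ i, u i = s i * u (i + 1) + 2 * d i)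
    (hd : ∀ i, |d i| ≤ t i) (i : Fin m) :
    |u (i + 1) + s i * u i| ≤ 2 * (∑ j, t j - t i) := by
  set f : ℕ → Fin m := fun l => i + 1 + Fin.ofNat m l with hf
  have hf1 : ∀ l, f (l + 1) = f l + 1 := by
    intro l
    simp only [hf, add_assoc]
    congr 2
    ext; simp [Fin.val_add]
  have hf0 : f 0 = i + 1 := by simp [hf]
  have hsurj : ∀ l : Fin m, f l = (i + 1) + l := by
    intro l; simp [hf]
  have hm : m = (m - 1) + 1 := by have := NeZero.pos m; omega
  have hfl : f (m - 1) = i := by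
    have h1 : f (m - 1) + 1 = i + 1 := by
      rw [← hf1, ← hm]; simp only [hf]
      have : Fin.ofNat m m = 0 := by ext; simp
      rw [this, add_zero]
    exact add_right_cancel h1
  have key : ∀ k, |u (f 0) - (∏ l ∈ Finset.range k, s (f l)) * u (f k)| ≤
      2 * ∑ l ∈ Finset.range k, t (f l) ∧ |∏ l ∈ Finset.range k, s (f l)| = 1 := by
    intro k
    induction k with
    | zero => simp
    | succ k ih =>
      rw [Finset.prod_range_succ, Finset.sum_range_succ]
      set P := ∏ l ∈ Finset.range k, s (f l)
      obtain ⟨h1, h2⟩ := ih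
      constructor
      · have h3 : u (f 0) - P * s (f k) * u (f (k + 1)) =
            (u (f 0) - P * u (f k)) + P * (2 * d (f k)) := by
          rw [hu (f k), hf1]; ring
        rw [h3]
        refine (abs_add_le _ _).trans ?_
        rw [abs_mul P, h2, abs_mul, abs_two]
        linarith [hd (f k)]
      · rw [abs_mul, h2]
        rcases hs (f k) with h | h <;> simp [h]
  have hsum : ∑ j, t j = ∑ l ∈ Finset.range (m - 1), t (f l) + t i := by
    rw [← Equiv.sum_comp (Equiv.addLeft (i + 1)) t]
    simp only [Equiv.coe_addLeft, ← hsurj]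
    rw [Fin.sum_univ_eq_sum_range (fun l => t (f l)) m]
    conv_lhs => rw [hm]
    rw [Finset.sum_range_succ, hfl]
  have hpr : ∏ j, s j = (∏ l ∈ Finset.range (m - 1), s (f l)) * s i := by
    rw [← Equiv.prod_comp (Equiv.addLeft (i + 1)) s]
    simp only [Equiv.coe_addLeft, ← hsurj]
    rw [Fin.prod_univ_eq_prod_range (fun l => s (f l)) m]
    conv_lhs => rw [hm]
    rw [Finset.prod_range_succ, hfl]
  have h := (key (m - 1)).1
  rw [hf0, hfl] at h
  rw [hprod] at hpr
  have hP : (∏ l ∈ Finset.range (m - 1), s (f l)) = - s i := by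
    rcases hs i with h | h <;> rw [h] at hpr ⊢ <;> linarith
  rw [hP] at h
  rw [hsum]
  convert h using 2 <;> ring

theorem constraints_iff {m : ℕ} [NeZero m] (B : Finset (Fin m)) (hB : Odd B.card)
    (x y : Fin m → ℝ) :
    (((∀ i, x i ∈ Set.Icc (0:ℝ) 1) ∧ (∀ i, y i ∈ Set.Icc (0:ℝ) 1) ∧
      ∀ i, 0 ≤ y i ∧ y i ≤ x i ∧ y i ≤ x (i + 1) ∧ x i + x (i + 1) ≤ 1 + y i) ∧
      ∑ i, (aF B x y i + bF B x y i) < 1) ↔ (aF B x y, bF B x y) ∈ simplexT m := by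
  refine and_congr_left fun hsum => ⟨fun h i => ?_, fun h => ?_⟩
  · obtain ⟨h1, h2, h3, h4⟩ := h.2.2 i
    dsimp only [aF, bF]
    split_ifs <;> constructor <;> linarith
  · dsimp only at h hsum
    have key : ∀ i, 0 ≤ y i ∧ y i ≤ x i ∧ y i ≤ x (i + 1) ∧ x i + x (i + 1) ≤ 1 + y i := by
      intro i
      have hb := cyc_bound (fun i => 2 * x i - 1) (fun i => if i ∈ B then -1 else 1)
        (fun i => aF B x y i - bF B x y i) (fun i => aF B x y i + bF B x y i)
        (fun i => by split_ifs <;> simp) (by simp [hB.neg_one_pow])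
        (fun i => by dsimp only [aF, bF]; split_ifs <;> ring)
        (fun i => by rw [abs_le]; constructor <;> linarith [(h i).1, (h i).2]) i
      have hi := h i
      rw [abs_le] at hb
      obtain ⟨hb1, hb2⟩ := hb
      generalize ∑ i, (aF B x y i + bF B x y i) = T at *
      simp only [aF, bF] at *
      split_ifs at * <;> refine ⟨?_, ?_, ?_, ?_⟩ <;> linarith
    have hx : ∀ i, x i ∈ Set.Icc (0:ℝ) 1 := fun i => by
      obtain ⟨h1, h2, h3, h4⟩ := key i
      exact ⟨by linarith, by linarith⟩
    exact ⟨hx, fun i => ⟨(key i).1, (key i).2.1.trans (hx i).2⟩, key⟩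

theorem fin_ne_succ {n : ℕ} (i : Fin (n+1+1+1)) : i ≠ i + 1 := by
  intro h
  have : (1 : Fin (n+1+1+1)) = 0 := by
    have : i + 0 = i + 1 := by rw [add_zero]; exact h
    exact (add_left_cancel this).symm
  simp at this

theorem cycleG_adj {n : ℕ} (i j : Fin (n+1+1+1)) :
    (cycleG (n+1+1+1)).Adj i j ↔ j = i + 1 ∨ i = j + 1 := by
  have h : ∀ i j : Fin (n+1+1+1), ((i : ℕ) + 1) % (n+1+1+1) = (j : ℕ) ↔ j = i + 1 := by
    intro i j
    rw [Fin.ext_iff, Fin.val_add]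
    simp [eq_comm]
  rw [cycleG, SimpleGraph.fromRel_adj, h, h]
  constructor
  · exact fun h => h.2
  · intro h'
    refine ⟨?_, h'⟩
    rintro rfl
    rcases h' with h' | h' <;> exact fin_ne_succ _ h'

def edgeFun (n : ℕ) (i : Fin (n+1+1+1)) : (cycleG (n+1+1+1)).edgeSet :=
  ⟨s(i, i + 1), (SimpleGraph.mem_edgeSet _).mpr ((cycleG_adj _ _).2 (Or.inl rfl))⟩

theorem edgeFun_bij (n : ℕ) : Function.Bijective (edgeFun n) := by
  constructor
  · intro i j h
    have h := congrArg Subtype.val h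
    simp only [edgeFun, Sym2.eq_iff] at h
    rcases h with h | ⟨h1, h2⟩
    · exact h.1
    · exfalso
      subst h1
      have h2 := (add_assoc j 1 1).symm.trans h2
      have h3 : (1 + 1 : Fin (n+1+1+1)) = 0 := by
        have : j + (1 + 1) = j + 0 := by simpa using h2
        exact add_left_cancel this
      rw [Fin.ext_iff, Fin.val_add] at h3
      simp at h3
      rw [Nat.mod_eq_of_lt (by omega)] at h3
      omega
      
  · rintro ⟨e, he⟩
    induction e with
    | _ i j =>
      rw [SimpleGraph.mem_edgeSet, cycleG_adj] at he
      rcases he with rfl | rfl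
      · exact ⟨i, rfl⟩
      · exact ⟨j, Subtype.ext Sym2.eq_swap⟩

def edgeEquiv (n : ℕ) : Fin (n+1+1+1) ≃ (cycleG (n+1+1+1)).edgeSet :=
  Equiv.ofBijective _ (edgeFun_bij n)

theorem mem_QSet_iff (n : ℕ) (x : Fin (n+1+1+1) → ℝ) (z : (cycleG (n+1+1+1)).edgeSet → ℝ)
    (y : Fin (n+1+1+1) → ℝ) (hy : ∀ i, y i = z (edgeEquiv n i)) :
    (x, z) ∈ QSet (cycleG (n+1+1+1)) ↔
    ((∀ i, x i ∈ Set.Icc (0:ℝ) 1) ∧ (∀ i, y i ∈ Set.Icc (0:ℝ) 1) ∧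
      ∀ i, 0 ≤ y i ∧ y i ≤ x i ∧ y i ≤ x (i + 1) ∧ x i + x (i + 1) ≤ 1 + y i) := by
  have hy2 : ∀ i, y i = z ⟨s(i, i + 1),
    (SimpleGraph.mem_edgeSet _).mpr ((cycleG_adj _ _).2 (Or.inl rfl))⟩ := hy
  refine and_congr Iff.rfl (and_congr ?_ ?_)
  · simp only [hy]
    exact ((edgeEquiv n).forall_congr_left (p := fun i => z (edgeEquiv n i) ∈ Set.Icc (0:ℝ) 1) |>.trans
      (by simp)).symm
  · constructor
    · intro h i
      rw [hy2]
      exact h i (i + 1) ((cycleG_adj _ _).2 (Or.inl rfl))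
    · intro h i j hij
      rcases (cycleG_adj _ _).1 hij with h1 | h1
      · subst h1
        have := h i
        rw [hy2] at this
        exact this
      · subst h1
        have h2 := h j
        have h3 : (⟨s(j + 1, j), (SimpleGraph.mem_edgeSet _).mpr hij⟩ : (cycleG (n+1+1+1)).edgeSet) = ⟨s(j, j + 1),
            (SimpleGraph.mem_edgeSet _).mpr ((cycleG_adj _ _).2 (Or.inl rfl))⟩ :=
          Subtype.ext Sym2.eq_swap
        rw [hy2, ← h3] at h2
        dsimp only
        exact ⟨h2.1, h2.2.2.1, h2.2.1, by linarith [h2.2.2.2]⟩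

def edgeB (n : ℕ) (A : Finset (cycleG (n+1+1+1)).edgeSet) : Finset (Fin (n+1+1+1)) :=
  A.map (edgeEquiv n).symm.toEmbedding

theorem mem_edgeB (n : ℕ) (A : Finset (cycleG (n+1+1+1)).edgeSet) (i : Fin (n+1+1+1)) :
    i ∈ edgeB n A ↔ edgeEquiv n i ∈ A := by
  simp [edgeB, Finset.mem_map_equiv]

theorem sum_edgeB (n : ℕ) (A : Finset (cycleG (n+1+1+1)).edgeSet)
    (g : (cycleG (n+1+1+1)).edgeSet → ℝ) :
    ∑ e ∈ A, g e = ∑ i, if i ∈ edgeB n A then g (edgeEquiv n i) else 0 := by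
  rw [← Finset.sum_filter]
  have h : Finset.univ.filter (fun i => i ∈ edgeB n A) = edgeB n A := by ext i; simp
  rw [h, edgeB, Finset.sum_map]
  simp

theorem deg_edgeB (n : ℕ) (A : Finset (cycleG (n+1+1+1)).edgeSet) (v : Fin (n+1+1+1)) :
    (A.filter fun e : (cycleG (n+1+1+1)).edgeSet => v ∈ (e : Sym2 (Fin (n+1+1+1)))).card =
      (if v ∈ edgeB n A then 1 else 0) + (if v - 1 ∈ edgeB n A then 1 else 0) := by
  have h : ((A.filter fun e : (cycleG (n+1+1+1)).edgeSet =>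
      v ∈ (e : Sym2 (Fin (n+1+1+1)))).card : ℝ) =
      (if v ∈ edgeB n A then 1 else 0) + (if v - 1 ∈ edgeB n A then 1 else 0) := by
    rw [Finset.card_filter]
    push_cast
    rw [sum_edgeB]
    have h1 : ∀ i : Fin (n+1+1+1), (if i ∈ edgeB n A then
        (if v ∈ ((edgeEquiv n i : (cycleG (n+1+1+1)).edgeSet) : Sym2 (Fin (n+1+1+1))) then (1:ℝ) else 0) else 0) =
        (if i = v then (if i ∈ edgeB n A then 1 else 0) else 0) +
        (if i = v - 1 then (if i ∈ edgeB n A then 1 else 0) else 0) := by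
      intro i
      have h2 : v ∈ ((edgeEquiv n i : (cycleG (n+1+1+1)).edgeSet) : Sym2 (Fin (n+1+1+1))) ↔
          i = v ∨ i = v - 1 := by
        change v ∈ s(i, i + 1) ↔ _
        rw [Sym2.mem_iff, eq_sub_iff_add_eq, eq_comm, @eq_comm _ v (i + 1)]
      have h3 : ¬ (i = v ∧ i = v - 1) := by
        rintro ⟨rfl, h⟩
        rw [eq_sub_iff_add_eq] at h
        exact fin_ne_succ _ h.symm
      simp only [h2]
      by_cases ha : i = v <;> by_cases hb : i = v - 1 <;> by_cases hc : i ∈ edgeB n A <;>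
        simp_all
    rw [Finset.sum_congr rfl (fun i _ => h1 i), Finset.sum_add_distrib]
    simp
  exact_mod_cast h

theorem OC_iff (n : ℕ) (A : Finset (cycleG (n+1+1+1)).edgeSet) (hA : Odd A.card)
    (x : Fin (n+1+1+1) → ℝ) (z : (cycleG (n+1+1+1)).edgeSet → ℝ)
    (y : Fin (n+1+1+1) → ℝ) (hy : ∀ i, y i = z (edgeEquiv n i)) :
    ¬ OC A (x, z) ↔ ∑ i, (aF (edgeB n A) x y i + bF (edgeB n A) x y i) < 1 := by
  set B := edgeB n A with hBdef
  set χ : Fin (n+1+1+1) → ℝ := fun i => if i ∈ B then 1 else 0 with hχ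
  have hcard : (A.card : ℝ) = ∑ i, χ i := by
    have := sum_edgeB n A (fun _ => 1)
    simpa [hχ] using this
  have hhalf : ((A.card / 2 : ℕ) : ℝ) = ((A.card : ℝ) - 1) / 2 := by
    obtain ⟨k, hk⟩ := hA
    have : A.card / 2 = k := by omega
    rw [this, hk]; push_cast; ring
  have hS : (∑ e ∈ Aᶜ, z e) - (∑ e ∈ A, z e) = ∑ i, (1 - 2 * χ i) * y i := by
    have h1 := Finset.sum_add_sum_compl A z
    have h2 : ∑ e, z e = ∑ i, y i := by
      rw [← Equiv.sum_comp (edgeEquiv n)]; simp [hy]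
    have h3 : ∑ e ∈ A, z e = ∑ i, χ i * y i := by
      rw [sum_edgeB]; simp [hχ, hy, hBdef]
    have h4 : ∑ i, (1 - 2 * χ i) * y i = ∑ i, y i - 2 * ∑ i, χ i * y i := by
      rw [Finset.mul_sum, ← Finset.sum_sub_distrib]
      exact Finset.sum_congr rfl fun i _ => by ring
    rw [h4]; linarith
  have hV : (∑ i ∈ Finset.univ.filter
      (fun i : Fin (n+1+1+1) =>
        (A.filter fun e : (cycleG (n+1+1+1)).edgeSet => i ∈ (e : Sym2 (Fin (n+1+1+1)))).card = 2), x i)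
      - (∑ i ∈ Finset.univ.filter
      (fun i : Fin (n+1+1+1) =>
        (A.filter fun e : (cycleG (n+1+1+1)).edgeSet => i ∈ (e : Sym2 (Fin (n+1+1+1)))).card = 0), x i)
      = ∑ i, (χ i - 1/2) * (x i + x (i + 1)) := by
    have h1 : ∑ i, (χ i - 1/2) * x (i + 1) = ∑ i, (χ (i - 1) - 1/2) * x i := by
      rw [← Equiv.sum_comp (Equiv.addRight (1 : Fin (n+1+1+1)))
        (fun i => (χ (i - 1) - 1/2) * x i)]
      simp
    simp only [mul_add, Finset.sum_add_distrib]
    rw [h1, ← Finset.sum_add_distrib, Finset.sum_filter, Finset.sum_filter,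
      ← Finset.sum_sub_distrib]
    refine Finset.sum_congr rfl fun i _ => ?_
    rw [deg_edgeB]
    simp only [hχ, ← hBdef]
    split_ifs <;> first | omega | (exfalso; omega) | ring1
  have hT : ∑ i, (χ i - 1/2) * (x i + x (i + 1)) + ∑ i, (1 - 2 * χ i) * y i =
      (A.card : ℝ) / 2 - (∑ i, (aF B x y i + bF B x y i)) / 2 := by
    rw [hcard, ← sub_div, ← Finset.sum_sub_distrib, Finset.sum_div, ← Finset.sum_add_distrib]
    refine Finset.sum_congr rfl fun i _ => ?_
    simp only [hχ, aF, bF]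
    split_ifs <;> ring
  unfold OC
  dsimp only
  rw [hhalf, add_sub_assoc, hV, hS, hT, not_le]
  constructor <;> intro h <;> linarith

/-- The volume of the part of `Q(C_m)` violating a single odd cycle inequality is
`1 / (2 * (2m)!)`. -/
theorem volume_cutoff_oddCycle (m : ℕ) (hm : 3 ≤ m)
    (A : Finset (cycleG m).edgeSet) (hA : Odd A.card) :
    volume {p | p ∈ QSet (cycleG m) ∧ ¬ OC A p} =
      1 / (2 * (Nat.factorial (2 * m) : ENNReal)) := by
  obtain ⟨n, rfl⟩ : ∃ n, m = n + 1 + 1 + 1 := ⟨m - 3, by omega⟩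
  have hB : Odd (edgeB n A).card := by simpa [edgeB] using hA
  have hmp : MeasurePreserving ((MeasurableEquiv.refl (Fin (n+1+1+1) → ℝ)).prodCongr
      (MeasurableEquiv.piCongrLeft (fun _ => ℝ) (edgeEquiv n))) volume volume :=
    (MeasurePreserving.id volume).prod
      (volume_measurePreserving_piCongrLeft (fun _ => ℝ) (edgeEquiv n))
  rw [← hmp.measure_preimage_equiv]
  have hset : ((MeasurableEquiv.refl (Fin (n+1+1+1) → ℝ)).prodCongr
      (MeasurableEquiv.piCongrLeft (fun _ => ℝ) (edgeEquiv n))) ⁻¹'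
      {p | p ∈ QSet (cycleG (n+1+1+1)) ∧ ¬ OC A p} =
      {p : (Fin (n+1+1+1) → ℝ) × (Fin (n+1+1+1) → ℝ) |
        (aF (edgeB n A) p.1 p.2, bF (edgeB n A) p.1 p.2) ∈ simplexT (n+1+1+1)} := by
    ext ⟨x, y⟩
    have hy : ∀ i, y i =
        (MeasurableEquiv.piCongrLeft (fun _ => ℝ) (edgeEquiv n)) y (edgeEquiv n i) := fun i =>
      (Equiv.piCongrLeft_apply_apply (fun _ => ℝ) (edgeEquiv n) y i).symm
    exact (and_congr (mem_QSet_iff n x _ y hy) (OC_iff n A hA x _ y hy)).trans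
      (constraints_iff (edgeB n A) hB x y)
  rw [hset, cut_volume (n+1) _ hB, simplexT, simplex_prod, ← ENNReal.ofReal_mul (by norm_num)]
  have hpos : (0 : ℝ) < 2 * (Nat.factorial (2 * (n+1+1+1)) : ℝ) := by positivity
  rw [show (1 / 2 * (1 / (Nat.factorial (2 * (n+1+1+1)) : ℝ))) =
      1 / (2 * (Nat.factorial (2 * (n+1+1+1)) : ℝ)) by field_simp,
    ENNReal.ofReal_div_of_pos hpos, ENNReal.ofReal_mul (by norm_num)]
  simp
end
end

section
/- For every m >= 3, the boolean quadric polytope P(C_m) of the cycle C_m is exactly the set of points of Q(C_m) that satisfy the odd cycle inequality OC(A) for every odd-cardinality subset A of the edge set of C_m. -/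
open MeasureTheory Filter

noncomputable section

/-- The boolean quadric polytope `P(G)` of a graph `G`: the convex hull of the 0/1
points with `y_{ij} = x_i * x_j` for every edge `(i,j)`. -/
def BQPSet {V : Type*} (G : SimpleGraph V) : Set ((V → ℝ) × (↥G.edgeSet → ℝ)) :=
  convexHull ℝ {p | (∀ i, p.1 i = 0 ∨ p.1 i = 1) ∧
    ∀ (i j : V) (h : G.Adj i j),
      p.2 ⟨s(i, j), (SimpleGraph.mem_edgeSet _).mpr h⟩ = p.1 i * p.1 j}

/-- Upper and lower path bounds. -/
def pathUV (z : ℕ → ℝ) : ℕ → ℝ × ℝ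
  | 0 => (0, 1)
  | n + 1 => (min ((pathUV z n).1 + z n) ((pathUV z n).2 + 1 - z n),
      min ((pathUV z n).2 + z n) ((pathUV z n).1 + 1 - z n))

def pathC (z : ℕ → ℝ) (A : Finset ℕ) (n : ℕ) : ℝ :=
  ∑ i ∈ Finset.range n, if i ∈ A then 1 - z i else z i

lemma pathC_succ_not (z : ℕ → ℝ) (A : Finset ℕ) (n : ℕ) (hA : A ⊆ Finset.range n) :
    pathC z A (n + 1) = pathC z A n + z n := by
  have : n ∉ A := fun h => by simpa using hA h
  simp [pathC, Finset.sum_range_succ, this]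

lemma pathC_succ_insert (z : ℕ → ℝ) (A : Finset ℕ) (n : ℕ) :
    pathC z (insert n A) (n + 1) = pathC z A n + (1 - z n) := by
  unfold pathC
  rw [Finset.sum_range_succ]
  congr 1
  · apply Finset.sum_congr rfl
    intro i hi
    have : i ≠ n := by simp at hi; omega
    simp [this]
  · simp

lemma sub_succ {A : Finset ℕ} {n : ℕ} (hA : A ⊆ Finset.range n) :
    A ⊆ Finset.range (n + 1) ∧ insert n A ⊆ Finset.range (n + 1) ∧
    (insert n A).card = A.card + 1 := by
  have : n ∉ A := fun h => by simpa using hA h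
  refine ⟨fun i hi => ?_, fun i hi => ?_, by simp [this]⟩
  · have := hA hi; simp at this ⊢; omega
  · rcases Finset.mem_insert.1 hi with h | h
    · simp [h]
    · have := hA h; simp at this ⊢; omega

lemma pathUV_attained (z : ℕ → ℝ) (h0 : 0 ≤ z 0) (h1 : z 0 ≤ 1) (n : ℕ) :
    (∃ A : Finset ℕ, A ⊆ Finset.range (n + 1) ∧ Even A.card ∧
      pathC z A (n + 1) = (pathUV z (n + 1)).1) ∧
    (∃ A : Finset ℕ, A ⊆ Finset.range (n + 1) ∧ Odd A.card ∧
      pathC z A (n + 1) = (pathUV z (n + 1)).2) := by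
  induction n with
  | zero =>
    refine ⟨⟨∅, by simp, by simp, ?_⟩, ⟨{0}, by simp, by simp, ?_⟩⟩
    · simp [pathC, pathUV]; linarith
    · simp [pathC, pathUV]; linarith
  | succ n ih =>
    obtain ⟨⟨A, hA, hAe, hAc⟩, ⟨B, hB, hBo, hBc⟩⟩ := ih
    obtain ⟨a1, a2, a3⟩ := sub_succ hA
    obtain ⟨b1, b2, b3⟩ := sub_succ hB
    constructor
    · rw [pathUV]
      rcases min_choice ((pathUV z (n+1)).1 + z (n+1)) ((pathUV z (n+1)).2 + 1 - z (n+1)) with h | h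
      · exact ⟨A, a1, hAe, by rw [h, pathC_succ_not _ _ _ hA, hAc]⟩
      · refine ⟨insert (n+1) B, b2, by rw [b3]; exact hBo.add_one, ?_⟩
        rw [h, pathC_succ_insert, hBc]; ring
    · rw [pathUV]
      rcases min_choice ((pathUV z (n+1)).2 + z (n+1)) ((pathUV z (n+1)).1 + 1 - z (n+1)) with h | h
      · exact ⟨B, b1, hBo, by rw [h, pathC_succ_not _ _ _ hB, hBc]⟩
      · refine ⟨insert (n+1) A, a2, by rw [a3]; exact hAe.add_one, ?_⟩
        rw [h, pathC_succ_insert, hAc]; ring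

/-- Edge feasibility in terms of the cut variable. -/
def Feas (a b z : ℝ) : Prop := a - b ≤ z ∧ b - a ≤ z ∧ z ≤ a + b ∧ z ≤ 2 - a - b

lemma pathUV_inv (x z : ℕ → ℝ) (hx : ∀ i, 0 ≤ x i ∧ x i ≤ 1) (n : ℕ)
    (hz : ∀ i < n, Feas (x i) (x (i+1)) (z i)) :
    1 ≤ (pathUV z n).1 + (pathUV z n).2 ∧
    x 0 - x n ≤ (pathUV z n).1 ∧ x n - x 0 ≤ (pathUV z n).1 ∧
    1 - x 0 - x n ≤ (pathUV z n).2 ∧ x 0 + x n - 1 ≤ (pathUV z n).2 := by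
  induction n with
  | zero =>
    have := hx 0
    refine ⟨?_, ?_, ?_, ?_, ?_⟩ <;> simp [pathUV] <;> linarith
  | succ n ih =>
    obtain ⟨i1, i2, i3, i4, i5⟩ := ih (fun i hi => hz i (by omega))
    obtain ⟨f1, f2, f3, f4⟩ := hz n (by omega)
    have := hx n
    have := hx (n+1)
    simp only [pathUV]
    refine ⟨?_, le_min ?_ ?_, le_min ?_ ?_, le_min ?_ ?_, le_min ?_ ?_⟩ <;> try linarith
    rcases min_choice ((pathUV z n).1 + z n) ((pathUV z n).2 + 1 - z n) with h | h <;>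
    rcases min_choice ((pathUV z n).2 + z n) ((pathUV z n).1 + 1 - z n) with h' | h' <;>
    rw [h, h'] <;> linarith

lemma exists_frac (p s : ℝ) (h0 : 0 ≤ s) (h1 : s ≤ p) : ∃ h : ℝ, 0 ≤ h ∧ h ≤ 1 ∧ p * h = s := by
  rcases eq_or_lt_of_le (h0.trans h1) with h | h
  · exact ⟨0, le_rfl, zero_le_one, by linarith⟩
  · exact ⟨s / p, by positivity, (div_le_one h).2 h1, by field_simp⟩

lemma triangle_t (a b c zab zbc zac : ℝ) (h1 : Feas a b zab) (h2 : Feas b c zbc)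
    (h3 : Feas a c zac) (t1 : zab ≤ zbc + zac) (t2 : zbc ≤ zab + zac) (t3 : zac ≤ zab + zbc)
    (t4 : zab + zbc + zac ≤ 2) :
    ∃ t : ℝ, 0 ≤ t ∧ t ≤ (a + b - zab)/2 ∧
      0 ≤ (a + c - zac)/2 - t ∧ (a + c - zac)/2 - t ≤ a - (a + b - zab)/2 ∧
      0 ≤ (b + c - zbc)/2 - t ∧ (b + c - zbc)/2 - t ≤ b - (a + b - zab)/2 ∧
      0 ≤ c - (a + c - zac)/2 - (b + c - zbc)/2 + t ∧
      c - (a + c - zac)/2 - (b + c - zbc)/2 + t ≤ 1 - a - b + (a + b - zab)/2 := by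
  obtain ⟨a1, a2, a3, a4⟩ := h1
  obtain ⟨b1, b2, b3, b4⟩ := h2
  obtain ⟨c1, c2, c3, c4⟩ := h3
  obtain ⟨t, ht, ht'⟩ : ∃ t, max (max 0 ((a + c - zac)/2 + (a + b - zab)/2 - a))
      (max ((b + c - zbc)/2 + (a + b - zab)/2 - b) ((a + c - zac)/2 + (b + c - zbc)/2 - c)) ≤ t ∧
      t ≤ min (min ((a + b - zab)/2) ((a + c - zac)/2)) (min ((b + c - zbc)/2)
        (1 - a - b + (a + b - zab)/2 - c + (a + c - zac)/2 + (b + c - zbc)/2)) := by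
    refine ⟨_, le_rfl, ?_⟩
    simp only [max_le_iff, le_min_iff]
    refine ⟨⟨⟨⟨?_, ?_⟩, ?_, ?_⟩, ⟨?_, ?_⟩, ?_, ?_⟩, ⟨⟨?_, ?_⟩, ?_, ?_⟩, ⟨?_, ?_⟩, ?_, ?_⟩ <;>
      linarith
  simp only [max_le_iff, le_min_iff] at ht ht'
  obtain ⟨⟨_, _⟩, _, _⟩ := ht
  obtain ⟨⟨_, _⟩, _, _⟩ := ht'
  refine ⟨t, ?_, ?_, ?_, ?_, ?_, ?_, ?_, ?_⟩ <;> linarith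

theorem path_measure (x z : ℕ → ℝ) (hx : ∀ i, 0 ≤ x i ∧ x i ≤ 1) (n : ℕ)
    (hz : ∀ i < n, Feas (x i) (x (i+1)) (z i)) (w : ℝ) (hw : Feas (x 0) (x n) w)
    (hU : w ≤ (pathUV z n).1) (hV : 1 - (pathUV z n).2 ≤ w) :
    ∃ (Ω : Type) (_ : Fintype Ω) (μ : Ω → ℝ) (X : ℕ → Ω → ℝ),
      (∀ ω, 0 ≤ μ ω) ∧ ∑ ω, μ ω = 1 ∧ (∀ i ω, X i ω = 0 ∨ X i ω = 1) ∧
      (∀ i ≤ n, ∑ ω, μ ω * X i ω = x i) ∧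
      (∀ i < n, ∑ ω, μ ω * (X i ω * X (i+1) ω) = (x i + x (i+1) - z i)/2) ∧
      ∑ ω, μ ω * (X 0 ω * X n ω) = (x 0 + x n - w)/2 := by
  induction n generalizing w with
  | zero =>
    have := hx 0
    obtain ⟨w1, w2, w3, w4⟩ := hw
    simp [pathUV] at hU hV
    refine ⟨Bool, inferInstance, fun b => if b then x 0 else 1 - x 0,
      fun _ b => if b then 1 else 0, ?_, ?_, ?_, ?_, ?_, ?_⟩
    · intro b; cases b <;> simp <;> linarith
    · simp
    · intro i b; cases b <;> simp
    · intro i hi; obtain rfl : i = 0 := by omega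
      simp
    · intro i hi; omega
    · simp; linarith
  | succ n ih =>
    obtain ⟨i1, i2, i3, i4, i5⟩ := pathUV_inv x z hx n (fun i hi => hz i (by omega))
    have hzn := hz n (by omega)
    have f := hzn
    have g := hw
    obtain ⟨f1, f2, f3, f4⟩ := f
    obtain ⟨g1, g2, g3, g4⟩ := g
    have := hx 0
    have := hx n
    have := hx (n+1)
    simp only [pathUV] at hU hV
    have u1 := hU.trans (min_le_left _ _)
    have u2 := hU.trans (min_le_right _ _)
    have v1 := (sub_le_sub_left (min_le_left _ _) 1).trans hV
    have v2 := (sub_le_sub_left (min_le_right _ _) 1).trans hV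
    have v1 : 1 - ((pathUV z n).2 + z n) ≤ w := by
      have := min_le_left ((pathUV z n).2 + z n) ((pathUV z n).1 + 1 - z n)
      linarith
    have v2 : 1 - ((pathUV z n).1 + 1 - z n) ≤ w := by
      have := min_le_right ((pathUV z n).2 + z n) ((pathUV z n).1 + 1 - z n)
      linarith
    obtain ⟨w', hl, hu⟩ : ∃ w', max (max (x 0 - x n) (x n - x 0)) (max (1 - (pathUV z n).2)
        (max (z n - w) (w - z n))) ≤ w' ∧ w' ≤ min (min (x 0 + x n) (2 - x 0 - x n))
          (min (pathUV z n).1 (min (z n + w) (2 - z n - w))) := by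
      refine ⟨_, le_rfl, ?_⟩
      simp only [max_le_iff, le_min_iff]
      refine ⟨⟨⟨⟨?_, ?_⟩, ?_, ?_, ?_⟩, ⟨?_, ?_⟩, ?_, ?_, ?_⟩, ⟨⟨?_, ?_⟩, ?_, ?_, ?_⟩,
        ⟨⟨?_, ?_⟩, ?_, ?_, ?_⟩, ⟨⟨?_, ?_⟩, ?_, ?_, ?_⟩⟩ <;> linarith
    simp only [max_le_iff, le_min_iff] at hl hu
    obtain ⟨⟨l1, l2⟩, l3, l4, l5⟩ := hl
    obtain ⟨⟨m1, m2⟩, m3, m4, m5⟩ := hu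
    obtain ⟨Ω, _, μ, X, hμ, hμ1, hX, hXx, hXX, hX0⟩ :=
      ih (fun i hi => hz i (by omega)) w' ⟨l1, l2, m1, m2⟩ m3 l3
    obtain ⟨t, t1, t2, t3, t4, t5, t6, t7, t8⟩ := triangle_t (x 0) (x n) (x (n+1)) w' (z n) w
      ⟨l1, l2, m1, m2⟩ hzn hw (by linarith) (by linarith) (by linarith) (by linarith)
    obtain ⟨h11, a0, a1, a2⟩ := exists_frac _ _ t1 t2
    obtain ⟨h10, b0, b1, b2⟩ := exists_frac _ _ t3 t4
    obtain ⟨h01, c0, c1, c2⟩ := exists_frac _ _ t5 t6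
    obtain ⟨h00, d0, d1, d2⟩ := exists_frac _ _ t7 t8
    have hn := hXx n le_rfl
    have h0 := hXx 0 (Nat.zero_le _)
    let H : Ω → ℝ := fun ω => h11 * (X 0 ω * X n ω) + h10 * (X 0 ω - X 0 ω * X n ω)
      + h01 * (X n ω - X 0 ω * X n ω) + h00 * (1 - X 0 ω - X n ω + X 0 ω * X n ω)
    have hH : ∀ ω, 0 ≤ H ω ∧ H ω ≤ 1 := by
      intro ω
      rcases hX 0 ω with h | h <;> rcases hX n ω with h' | h' <;> simp [H, h, h'] <;>
        constructor <;> assumption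
    have e1 : ∑ ω, μ ω * H ω = x (n+1) := by
      have : ∑ ω, μ ω * H ω = h11 * ∑ ω, μ ω * (X 0 ω * X n ω)
        + h10 * (∑ ω, μ ω * X 0 ω - ∑ ω, μ ω * (X 0 ω * X n ω))
        + h01 * (∑ ω, μ ω * X n ω - ∑ ω, μ ω * (X 0 ω * X n ω))
        + h00 * (∑ ω, μ ω - ∑ ω, μ ω * X 0 ω - ∑ ω, μ ω * X n ω
          + ∑ ω, μ ω * (X 0 ω * X n ω)) := by
        simp only [← Finset.sum_sub_distrib, ← Finset.sum_add_distrib, Finset.mul_sum]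
        exact Finset.sum_congr rfl (fun ω _ => by simp only [H]; ring)
      rw [this, hX0, h0, hn, hμ1]; linarith
    have e2 : ∑ ω, μ ω * (X n ω * H ω) = (x n + x (n+1) - z n)/2 := by
      have : ∑ ω, μ ω * (X n ω * H ω) = h11 * ∑ ω, μ ω * (X 0 ω * X n ω)
        + h01 * (∑ ω, μ ω * X n ω - ∑ ω, μ ω * (X 0 ω * X n ω)) := by
        simp only [← Finset.sum_sub_distrib, ← Finset.sum_add_distrib, Finset.mul_sum]
        refine Finset.sum_congr rfl (fun ω _ => ?_)
        rcases hX 0 ω with h | h <;> rcases hX n ω with h' | h' <;> simp [H, h, h'] <;> ring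
      rw [this, hX0, hn]; linarith
    have e3 : ∑ ω, μ ω * (X 0 ω * H ω) = (x 0 + x (n+1) - w)/2 := by
      have : ∑ ω, μ ω * (X 0 ω * H ω) = h11 * ∑ ω, μ ω * (X 0 ω * X n ω)
        + h10 * (∑ ω, μ ω * X 0 ω - ∑ ω, μ ω * (X 0 ω * X n ω)) := by
        simp only [← Finset.sum_sub_distrib, ← Finset.sum_add_distrib, Finset.mul_sum]
        refine Finset.sum_congr rfl (fun ω _ => ?_)
        rcases hX 0 ω with h | h <;> rcases hX n ω with h' | h' <;> simp [H, h, h'] <;> ring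
      rw [this, hX0, h0]; linarith
    have key : ∀ g : Ω → ℝ, ∑ q : Ω × Bool, (μ q.1 * if q.2 then H q.1 else 1 - H q.1) * g q.1
        = ∑ ω, μ ω * g ω := by
      intro g
      rw [Fintype.sum_prod_type]
      refine Finset.sum_congr rfl (fun ω _ => ?_)
      simp; ring
    have key2 : ∀ g : Ω → ℝ, ∑ q : Ω × Bool, (μ q.1 * if q.2 then H q.1 else 1 - H q.1) *
        (g q.1 * if q.2 then 1 else 0) = ∑ ω, μ ω * (g ω * H ω) := by
      intro g
      rw [Fintype.sum_prod_type]
      refine Finset.sum_congr rfl (fun ω _ => ?_)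
      simp; ring
    refine ⟨Ω × Bool, inferInstance, fun q => μ q.1 * if q.2 then H q.1 else 1 - H q.1,
      fun i q => if i = n + 1 then (if q.2 then 1 else 0) else X i q.1, ?_, ?_, ?_, ?_, ?_, ?_⟩
    · rintro ⟨ω, b⟩
      have := hH ω
      apply mul_nonneg (hμ ω)
      cases b <;> simp <;> linarith
    · have := key (fun _ => 1)
      simpa [hμ1] using this
    · rintro i ⟨ω, b⟩
      by_cases h : i = n + 1
      · cases b <;> simp [h]
      · simpa [h] using hX i ω
    · intro i hi
      by_cases h : i = n + 1
      · have := key2 (fun _ => 1)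
        simp only [one_mul] at this
        simp only [h, if_true]
        rw [this, e1]
      · simp only [h, if_false]
        rw [key, hXx i (by omega)]
    · intro i hi
      by_cases h : i = n
      · subst h
        simp only [if_true, show i ≠ i + 1 by omega, if_false]
        rw [key2 (X i), e2]
      · simp only [show i ≠ n + 1 by omega, show i + 1 ≠ n + 1 by omega, if_false]
        rw [key (fun ω => X i ω * X (i+1) ω), hXX i (by omega)]
    · simp only [if_true, show 0 ≠ n + 1 by omega, if_false]
      rw [key2 (X 0), e3]

/-! ### The cycle -/

lemma cyc_adj {n : ℕ} {i j : Fin (n+3)} : (cycleG (n+3)).Adj i j ↔ i + 1 = j ∨ j + 1 = i := by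
  have key : ∀ a b : Fin (n+3), ((a : ℕ) + 1) % (n+3) = (b : ℕ) ↔ a + 1 = b := by
    intro a b
    rw [Fin.ext_iff, Fin.val_add]; simp
  rw [cycleG, SimpleGraph.fromRel_adj, key, key]
  constructor
  · exact fun h => h.2
  · refine fun h => ⟨?_, h⟩
    rintro rfl
    simp at h

lemma cyc_adj_succ {n : ℕ} (i : Fin (n+3)) : (cycleG (n+3)).Adj i (i+1) := cyc_adj.2 (Or.inl rfl)

def cycE0 {n : ℕ} (i : Fin (n+3)) : (cycleG (n+3)).edgeSet :=
  ⟨s(i, i+1), (SimpleGraph.mem_edgeSet _).mpr (cyc_adj_succ i)⟩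

lemma cycE0_bij {n : ℕ} : Function.Bijective (cycE0 (n := n)) := by
  constructor
  · intro i j h
    have h' : s(i, i+1) = s(j, j+1) := congrArg Subtype.val h
    rw [Sym2.eq_iff] at h'
    rcases h' with h' | ⟨h1, h2⟩
    · exact h'.1
    · exfalso
      rw [h1, add_assoc, add_eq_left] at h2
      have := congrArg Fin.val h2
      rw [Fin.val_add, Fin.val_one, Nat.mod_eq_of_lt (by omega)] at this
      simp at this
  · rintro ⟨e, he⟩
    induction e using Sym2.ind with
    | _ i j =>
      rcases cyc_adj.1 ((SimpleGraph.mem_edgeSet _).1 he) with h | h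
      · exact ⟨i, by simp [cycE0, h]⟩
      · exact ⟨j, by simp [cycE0, h, Sym2.eq_swap]⟩

def cycE {n : ℕ} : Fin (n+3) ≃ (cycleG (n+3)).edgeSet := Equiv.ofBijective _ cycE0_bij

lemma cycE_val {n : ℕ} (i : Fin (n+3)) : ((cycE i : (cycleG (n+3)).edgeSet) : Sym2 _) = s(i, i+1) :=
  rfl

/-- the left hand side of the odd cycle inequality -/
def ocL {m : ℕ} (A : Finset (cycleG m).edgeSet)
    (p : (Fin m → ℝ) × (↥(cycleG m).edgeSet → ℝ)) : ℝ :=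
  (∑ i ∈ Finset.univ.filter
      (fun i : Fin m =>
        (A.filter fun e : (cycleG m).edgeSet => i ∈ (e : Sym2 (Fin m))).card = 2), p.1 i)
  - (∑ i ∈ Finset.univ.filter
      (fun i : Fin m =>
        (A.filter fun e : (cycleG m).edgeSet => i ∈ (e : Sym2 (Fin m))).card = 0), p.1 i)
  + (∑ e ∈ Aᶜ, p.2 e) - (∑ e ∈ A, p.2 e)

lemma deg_eq {n : ℕ} (A : Finset (cycleG (n+3)).edgeSet) (i : Fin (n+3)) :
    (A.filter fun e : (cycleG (n+3)).edgeSet => i ∈ (e : Sym2 (Fin (n+3)))).card =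
      (if cycE i ∈ A then 1 else 0) + (if cycE (i-1) ∈ A then 1 else 0) := by
  have h1 : (A.filter fun e : (cycleG (n+3)).edgeSet => i ∈ (e : Sym2 (Fin (n+3)))) =
      A.filter (fun e => e ∈ ({cycE i, cycE (i-1)} : Finset _)) := by
    apply Finset.filter_congr
    intro e _
    obtain ⟨k, rfl⟩ := cycE.surjective e
    rw [cycE_val]
    simp only [Sym2.mem_iff, Finset.mem_insert, Finset.mem_singleton, EmbeddingLike.apply_eq_iff_eq]
    constructor
    · rintro (h | h)
      · exact Or.inl h.symm
      · right; rw [h]; simp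
    · rintro (h | h)
      · exact Or.inl h.symm
      · right; rw [h]; simp
  have hne : cycE i ≠ cycE (i-1) := by
    intro h
    have := cycE.injective h
    simp [eq_sub_iff_add_eq] at this
  rw [h1, Finset.filter_mem_eq_inter, Finset.inter_comm]
  by_cases ha : cycE i ∈ A <;> by_cases hb : cycE (i-1) ∈ A <;>
    simp [ha, hb, Finset.insert_inter_of_mem, Finset.insert_inter_of_notMem, hne]

lemma ocL_eq {n : ℕ} (A : Finset (cycleG (n+3)).edgeSet)
    (p : (Fin (n+3) → ℝ) × (↥(cycleG (n+3)).edgeSet → ℝ)) :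
    2 * ocL A p = ∑ k : Fin (n+3), (if cycE k ∈ A then 1 else -1) *
      (p.1 k + p.1 (k+1) - 2 * p.2 (cycE k)) := by
  unfold ocL
  have hy1 : ∑ e ∈ Aᶜ, p.2 e = ∑ k : Fin (n+3), if cycE k ∈ A then 0 else p.2 (cycE k) := by
    rw [Equiv.sum_comp cycE (fun e => if e ∈ A then 0 else p.2 e), ← Finset.sum_filter_add_sum_filter_not _ (fun e => e ∈ A)]
    simp [Finset.sum_ite, Finset.filter_not, Finset.compl_eq_univ_sdiff]
  have hy2 : ∑ e ∈ A, p.2 e = ∑ k : Fin (n+3), if cycE k ∈ A then p.2 (cycE k) else 0 := by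
    rw [Equiv.sum_comp cycE (fun e => if e ∈ A then p.2 e else 0)]
    simp
  have hs : ∑ k : Fin (n+3), (if cycE k ∈ A then (1:ℝ) else -1) * p.1 (k+1)
      = ∑ k : Fin (n+3), (if cycE (k-1) ∈ A then (1:ℝ) else -1) * p.1 k := by
    rw [← Equiv.sum_comp (Equiv.addRight (1 : Fin (n+3)))
      (fun k => (if cycE (k-1) ∈ A then (1:ℝ) else -1) * p.1 k)]
    simp
  have hr : ∑ k : Fin (n+3), (if cycE k ∈ A then (1:ℝ) else -1) *
      (p.1 k + p.1 (k+1) - 2 * p.2 (cycE k)) =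
      ∑ k : Fin (n+3), (if cycE k ∈ A then (1:ℝ) else -1) * p.1 k +
      ∑ k : Fin (n+3), (if cycE (k-1) ∈ A then (1:ℝ) else -1) * p.1 k -
      2 * ∑ k : Fin (n+3), (if cycE k ∈ A then (1:ℝ) else -1) * p.2 (cycE k) := by
    rw [← hs, Finset.mul_sum, ← Finset.sum_add_distrib, ← Finset.sum_sub_distrib]
    exact Finset.sum_congr rfl (fun k _ => by ring)
  rw [hr, hy1, hy2]
  simp only [deg_eq, Finset.sum_filter]
  rw [Finset.mul_sum]
  simp only [← Finset.sum_sub_distrib, ← Finset.sum_add_distrib, Finset.mul_sum]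
  refine Finset.sum_congr rfl (fun k _ => ?_)
  by_cases ha : cycE k ∈ A <;> by_cases hb : cycE (k-1) ∈ A <;> simp [ha, hb] <;> ring

lemma OC_iff_s14 {m : ℕ} (A : Finset (cycleG m).edgeSet)
    (p : (Fin m → ℝ) × (↥(cycleG m).edgeSet → ℝ)) :
    OC A p ↔ ocL A p ≤ ((A.card / 2 : ℕ) : ℝ) := Iff.rfl

lemma sum_sign_card {n : ℕ} (A : Finset (cycleG (n+3)).edgeSet) :
    ∑ k : Fin (n+3), (if cycE k ∈ A then (1:ℝ) else 0) = A.card := by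
  rw [Equiv.sum_comp cycE (fun e => if e ∈ A then (1:ℝ) else 0)]
  simp

lemma convex_right {m : ℕ} : Convex ℝ {p : (Fin m → ℝ) × (↥(cycleG m).edgeSet → ℝ) |
    p ∈ QSet (cycleG m) ∧ ∀ A : Finset (cycleG m).edgeSet, Odd A.card → OC A p} := by
  rintro p ⟨⟨p1, p2, p3⟩, p4⟩ q ⟨⟨q1, q2, q3⟩, q4⟩ a b ha hb hab
  have mono : ∀ {u v u' v' : ℝ}, u ≤ u' → v ≤ v' → a * u + b * v ≤ a * u' + b * v' := by
    intro u v u' v' h h'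
    have := mul_le_mul_of_nonneg_left h ha
    have := mul_le_mul_of_nonneg_left h' hb
    linarith
  refine ⟨⟨fun i => ?_, fun e => ?_, fun i j h => ?_⟩, fun A hA => ?_⟩
  · have h1 := mono (p1 i).1 (q1 i).1
    have h2 := mono (p1 i).2 (q1 i).2
    constructor <;> simp <;> linarith
  · have h1 := mono (p2 e).1 (q2 e).1
    have h2 := mono (p2 e).2 (q2 e).2
    constructor <;> simp <;> linarith
  · obtain ⟨a1, a2, a3, a4⟩ := p3 i j h
    obtain ⟨b1, b2, b3, b4⟩ := q3 i j h
    have h1 := mono a1 b1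
    have h2 := mono a2 b2
    have h3 := mono a3 b3
    have h4 := mono a4 b4
    refine ⟨?_, ?_, ?_, ?_⟩ <;> simp <;> linarith
  · have h1 := mono ((OC_iff_s14 A p).1 (p4 A hA)) ((OC_iff_s14 A q).1 (q4 A hA))
    rw [OC_iff_s14]
    have : ocL A (a • p + b • q) = a * ocL A p + b * ocL A q := by
      simp only [ocL, Prod.fst_add, Prod.snd_add, Prod.smul_fst, Prod.smul_snd, Pi.add_apply,
        Pi.smul_apply, smul_eq_mul, Finset.sum_add_distrib, ← Finset.mul_sum]
      ring
    rw [this]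
    refine h1.trans (le_of_eq ?_)
    rw [← add_mul, hab, one_mul]

lemma int_sum {ι : Type*} (s : Finset ι) (f : ι → ℝ) (h : ∀ i, ∃ k : ℤ, f i = k) :
    ∃ k : ℤ, ∑ i ∈ s, f i = k := by
  choose g hg using h
  exact ⟨∑ i ∈ s, g i, by push_cast; exact Finset.sum_congr rfl (fun i _ => hg i)⟩

lemma vertex_mem {n : ℕ} (p : (Fin (n+3) → ℝ) × (↥(cycleG (n+3)).edgeSet → ℝ))
    (h1 : ∀ i, p.1 i = 0 ∨ p.1 i = 1)
    (h2 : ∀ (i j : Fin (n+3)) (h : (cycleG (n+3)).Adj i j),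
      p.2 ⟨s(i, j), (SimpleGraph.mem_edgeSet _).mpr h⟩ = p.1 i * p.1 j) :
    p ∈ QSet (cycleG (n+3)) ∧
      ∀ A : Finset (cycleG (n+3)).edgeSet, Odd A.card → OC A p := by
  have hE : ∀ k, p.2 (cycE k) = p.1 k * p.1 (k+1) := fun k => h2 _ _ (cyc_adj_succ k)
  have hy : ∀ e, p.2 e = 0 ∨ p.2 e = 1 := by
    intro e
    obtain ⟨k, rfl⟩ := cycE.surjective e
    rw [hE]
    rcases h1 k with h | h <;> rcases h1 (k+1) with h' | h' <;> simp [h, h']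
  refine ⟨⟨fun i => ?_, fun e => ?_, fun i j h => ?_⟩, fun A hA => ?_⟩
  · rcases h1 i with h | h <;> simp [h]
  · rcases hy e with h | h <;> simp [h]
  · rw [h2 i j h]
    rcases h1 i with h | h <;> rcases h1 j with h' | h' <;> norm_num [h, h']
  · rw [OC_iff_s14]
    have ix : ∀ i, ∃ k : ℤ, p.1 i = k := fun i => by
      rcases h1 i with h | h
      · exact ⟨0, by simp [h]⟩
      · exact ⟨1, by simp [h]⟩
    have iy : ∀ i, ∃ k : ℤ, p.2 i = k := fun i => by
      rcases hy i with h | h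
      · exact ⟨0, by simp [h]⟩
      · exact ⟨1, by simp [h]⟩
    obtain ⟨L, hL⟩ : ∃ L : ℤ, ocL A p = L := by
      unfold ocL
      obtain ⟨k1, e1⟩ := int_sum (Finset.univ.filter (fun i : Fin (n+3) =>
        (A.filter fun e : (cycleG (n+3)).edgeSet => i ∈ (e : Sym2 (Fin (n+3)))).card = 2)) p.1 ix
      obtain ⟨k2, e2⟩ := int_sum (Finset.univ.filter (fun i : Fin (n+3) =>
        (A.filter fun e : (cycleG (n+3)).edgeSet => i ∈ (e : Sym2 (Fin (n+3)))).card = 0)) p.1 ix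
      obtain ⟨k3, e3⟩ := int_sum Aᶜ p.2 iy
      obtain ⟨k4, e4⟩ := int_sum A p.2 iy
      exact ⟨k1 - k2 + k3 - k4, by rw [e1, e2, e3, e4]; push_cast; ring⟩
    have hle : 2 * ocL A p ≤ A.card := by
      rw [ocL_eq, ← sum_sign_card]
      refine Finset.sum_le_sum (fun k _ => ?_)
      rw [hE]
      by_cases ha : cycE k ∈ A <;> rcases h1 k with h | h <;> rcases h1 (k+1) with h' | h' <;>
        norm_num [h, h', ha]
    rw [hL] at hle ⊢
    have : 2 * L ≤ (A.card : ℤ) := by exact_mod_cast hle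
    have : L ≤ ((A.card / 2 : ℕ) : ℤ) := by omega
    have h' := (Int.cast_le (R := ℝ)).2 this
    rw [Int.cast_natCast] at h'
    exact h'

lemma cyc_hard {n : ℕ} (p : (Fin (n+3) → ℝ) × (↥(cycleG (n+3)).edgeSet → ℝ))
    (hp : p ∈ QSet (cycleG (n+3)))
    (hO : ∀ A : Finset (cycleG (n+3)).edgeSet, Odd A.card → OC A p) :
    p ∈ BQPSet (cycleG (n+3)) := by
  obtain ⟨q1, q2, q3⟩ := hp
  have hF : ∀ k, Feas (p.1 k) (p.1 (k+1)) (p.1 k + p.1 (k+1) - 2 * p.2 (cycE k)) := by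
    intro k
    obtain ⟨a1, a2, a3, a4⟩ := q3 k (k+1) (cyc_adj_succ k)
    change 0 ≤ p.2 (cycE k) at a1
    change p.2 (cycE k) ≤ _ at a2
    change p.2 (cycE k) ≤ _ at a3
    change _ ≤ 1 + p.2 (cycE k) at a4
    refine ⟨?_, ?_, ?_, ?_⟩ <;> linarith
  let x : ℕ → ℝ := fun i => p.1 (Fin.ofNat (n+3) i)
  let z : ℕ → ℝ := fun i => p.1 (Fin.ofNat (n+3) i) + p.1 (Fin.ofNat (n+3) i + 1)
    - 2 * p.2 (cycE (Fin.ofNat (n+3) i))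
  have hof : ∀ k : Fin (n+3), Fin.ofNat (n+3) (k : ℕ) = k := fun k => by simp
  have hsucc : ∀ i : ℕ, Fin.ofNat (n+3) (i+1) = Fin.ofNat (n+3) i + 1 := fun i => by
    apply Fin.ext; simp [Fin.val_add]
  have hx : ∀ i, 0 ≤ x i ∧ x i ≤ 1 := fun i => q1 _
  have hz : ∀ i, Feas (x i) (x (i+1)) (z i) := by
    intro i
    simp only [x, z, hsucc]
    exact hF _
  have x0 : x (n+2+1) = x 0 := by
    refine congrArg p.1 (Fin.ext ?_); simp
  have hC : ∀ B : Finset ℕ, B ⊆ Finset.range (n+3) → Odd B.card → 1 ≤ pathC z B (n+3) := by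
    intro B hB hodd
    have hB' : ∀ i ∈ B, i < n+3 := fun i hi => by simpa using hB hi
    let A : Finset (cycleG (n+3)).edgeSet := (B.attachFin hB').map cycE.toEmbedding
    have hAc : A.card = B.card := by simp [A]
    have hmem : ∀ k, cycE k ∈ A ↔ (k : ℕ) ∈ B := by intro k; simp [A]
    have h := (OC_iff_s14 A p).1 (hO A (by rw [hAc]; exact hodd))
    have h2 := ocL_eq A p
    have h3 := sum_sign_card A
    have h4 : 2 * ((A.card / 2 : ℕ) : ℝ) = A.card - 1 := by
      rw [hAc]
      obtain ⟨r, hr⟩ := hodd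
      have : B.card / 2 = r := by omega
      rw [this, hr]; push_cast; ring
    have h5 : pathC z B (n+3) = A.card - 2 * ocL A p := by
      rw [h2, ← h3, ← Finset.sum_sub_distrib, pathC, ← Fin.sum_univ_eq_sum_range
        (fun i => if i ∈ B then 1 - z i else z i)]
      refine Finset.sum_congr rfl (fun k _ => ?_)
      simp only [hmem, z, hof]
      by_cases hk : (k : ℕ) ∈ B <;> simp [hk]
    linarith
  have hz0 : 0 ≤ z 0 ∧ z 0 ≤ 1 := by
    obtain ⟨a, b, c, d⟩ := hz 0
    constructor <;> linarith
  obtain ⟨⟨A, hA, hAe, hAc⟩, ⟨B, hB, hBo, hBc⟩⟩ := pathUV_attained z hz0.1 hz0.2 (n+1)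
  have hw := hz (n+2)
  rw [x0] at hw
  have hU : z (n+2) ≤ (pathUV z (n+2)).1 := by
    obtain ⟨_, s2, s3⟩ := sub_succ hA
    have := hC _ s2 (by rw [s3]; exact hAe.add_one)
    rw [pathC_succ_insert, hAc] at this
    linarith
  have hV : 1 - (pathUV z (n+2)).2 ≤ z (n+2) := by
    obtain ⟨s1, _, _⟩ := sub_succ hB
    have := hC _ s1 hBo
    rw [pathC_succ_not _ _ _ hB, hBc] at this
    linarith
  obtain ⟨w1, w2, w3, w4⟩ := hw
  obtain ⟨Ω, _, μ, X, hμ, hμ1, hX, hXx, hXX, hX0⟩ := path_measure x z hx (n+2)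
    (fun i _ => hz i) (z (n+2)) ⟨w2, w1, by linarith, by linarith⟩ hU hV
  -- the vertices
  let v : Ω → (Fin (n+3) → ℝ) × (↥(cycleG (n+3)).edgeSet → ℝ) := fun ω =>
    (fun i => X i ω, fun e => X (cycE.symm e : Fin (n+3)) ω * X ((cycE.symm e + 1 : Fin (n+3)) : ℕ) ω)
  have hvE : ∀ ω k, (v ω).2 (cycE k) = X (k : ℕ) ω * X ((k + 1 : Fin (n+3)) : ℕ) ω := by
    intro ω k; simp [v]
  have hv : ∀ ω, v ω ∈ {p : (Fin (n+3) → ℝ) × (↥(cycleG (n+3)).edgeSet → ℝ) |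
      (∀ i, p.1 i = 0 ∨ p.1 i = 1) ∧ ∀ (i j : Fin (n+3)) (h : (cycleG (n+3)).Adj i j),
      p.2 ⟨s(i, j), (SimpleGraph.mem_edgeSet _).mpr h⟩ = p.1 i * p.1 j} := by
    intro ω
    refine ⟨fun i => hX _ _, fun i j h => ?_⟩
    rcases cyc_adj.1 h with h' | h'
    · subst h'
      exact hvE ω i
    · subst h'
      have : (⟨s(j+1, j), (SimpleGraph.mem_edgeSet _).mpr h⟩ : (cycleG (n+3)).edgeSet) = cycE j :=
        Subtype.ext Sym2.eq_swap
      rw [this, hvE, mul_comm]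
  have hsum : p = ∑ ω, μ ω • v ω := by
    refine Prod.ext (funext fun k => ?_) (funext fun e => ?_)
    · have := hXx k (by omega)
      simp only [Prod.fst_sum, Finset.sum_apply, Prod.smul_fst, Pi.smul_apply, smul_eq_mul, v]
      rw [this]
      simp only [x, hof]
    · obtain ⟨k, rfl⟩ := cycE.surjective e
      simp only [Prod.snd_sum, Finset.sum_apply, Prod.smul_snd, Pi.smul_apply, smul_eq_mul, hvE]
      by_cases hk : (k : ℕ) < n + 2
      · have h1 : ((k + 1 : Fin (n+3)) : ℕ) = k + 1 := by
          rw [Fin.val_add]; simp; omega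
        rw [h1, hXX k hk]
        simp only [x, z, hsucc, hof]
        ring
      · have h0 : (k : ℕ) = n + 2 := by omega
        have h1 : ((k + 1 : Fin (n+3)) : ℕ) = 0 := by
          rw [Fin.val_add, h0]; simp
        have h2 : x 0 = p.1 (k+1) := by
          refine congrArg p.1 (Fin.ext ?_); rw [h1]; simp
        have h3 : x (n+2) = p.1 k := by rw [← h0]; simp only [x, hof]
        have h4 : z (n+2) = p.1 k + p.1 (k+1) - 2 * p.2 (cycE k) := by
          rw [← h0]; simp only [z, hof]
        rw [h1, h0]
        have : ∑ ω, μ ω * (X (n+2) ω * X 0 ω) = ∑ ω, μ ω * (X 0 ω * X (n+2) ω) :=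
          Finset.sum_congr rfl (fun ω _ => by ring)
        rw [this, hX0, h2, h3, h4]
        ring
  rw [hsum]
  exact (convex_convexHull ℝ _).sum_mem (fun ω _ => hμ ω) hμ1
    (fun ω _ => subset_convexHull ℝ _ (hv ω))

/-- Padberg: `P(C_m)` is exactly the set of points of `Q(C_m)` satisfying all the
odd cycle inequalities. -/
theorem BQPSet_cycle_eq (m : ℕ) (hm : 3 ≤ m) :
    BQPSet (cycleG m) = {p | p ∈ QSet (cycleG m) ∧
      ∀ A : Finset (cycleG m).edgeSet, Odd A.card → OC A p} := by
  obtain ⟨n, rfl⟩ : ∃ n, m = n + 3 := ⟨m - 3, by omega⟩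
  apply Set.Subset.antisymm
  · exact convexHull_min (fun p hp => vertex_mem p hp.1 hp.2) convex_right
  · exact fun p hp => cyc_hard p hp.1 hp.2
end
end

section
/- For every m >= 3, the 2m-dimensional Lebesgue volume of the boolean quadric polytope P(C_m) equals m * A_{2m-1} / (2^m * (2m)!) - 2^(m-2) / (2m)!, where A_{2m-1} is the Euler number counting alternating permutations of {1, ..., 2m-1}. -/
open MeasureTheory Filter

noncomputable section

/-- The Euler number `A k`: the number of alternating permutations `σ` of
`{1, …, k}`, i.e. with `σ 1 > σ 2 < σ 3 > σ 4 < ⋯` (here written 0-indexed). -/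
def eulerNumber (k : ℕ) : ℕ :=
  Nat.card {σ : Equiv.Perm (Fin k) //
    ∀ (i : ℕ) (h : i + 1 < k),
      (Even i → σ ⟨i + 1, h⟩ < σ ⟨i, Nat.lt_of_succ_lt h⟩) ∧
      (Odd i → σ ⟨i, Nat.lt_of_succ_lt h⟩ < σ ⟨i + 1, h⟩)}

/-! ### Part A: integrality -/

lemma bq_tri (a b c p q r : ℝ)
    (hp : |a - b| ≤ p ∧ p ≤ a + b ∧ p ≤ 2 - a - b)
    (hq : |b - c| ≤ q ∧ q ≤ b + c ∧ q ≤ 2 - b - c)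
    (hr : |a - c| ≤ r ∧ r ≤ a + c ∧ r ≤ 2 - a - c)
    (h1 : p ≤ q + r) (h2 : q ≤ p + r) (h3 : r ≤ p + q) (h4 : p + q + r ≤ 2) :
    ∃ ν : Bool → Bool → Bool → ℝ, (∀ i j k, 0 ≤ ν i j k) ∧
      (ν true true true + ν true true false = (a + b - p) / 2) ∧
      (ν true false true + ν true false false = (a - b + p) / 2) ∧
      (ν false true true + ν false true false = (b - a + p) / 2) ∧
      (ν false false true + ν false false false = (2 - a - b - p) / 2) ∧
      (ν true true true + ν true false true + ν false true true + ν false false true = c) ∧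
      (ν true true false + ν true false true + ν false true false + ν false false true = q) ∧
      (ν true true false + ν true false false + ν false true true + ν false false true = r) := by
  obtain ⟨hp1, hp2, hp3⟩ := hp
  obtain ⟨hq1, hq2, hq3⟩ := hq
  obtain ⟨hr1, hr2, hr3⟩ := hr
  rw [abs_le] at hp1 hq1 hr1
  obtain ⟨u, hu⟩ : ∃ u, u = (a + b - p) / 2 := ⟨_, rfl⟩
  obtain ⟨v, hv⟩ : ∃ v, v = (b + c - q) / 2 := ⟨_, rfl⟩
  obtain ⟨w, hw⟩ : ∃ w, w = (a + c - r) / 2 := ⟨_, rfl⟩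
  obtain ⟨t, t1, t2, t3, t4, t5, t6, t7, t8⟩ : ∃ t : ℝ, 0 ≤ t ∧ u + w - a ≤ t ∧ u + v - b ≤ t ∧
      v + w - c ≤ t ∧ t ≤ u ∧ t ≤ v ∧ t ≤ w ∧ t ≤ 1 - a - b - c + u + v + w := by
    refine ⟨max (max 0 (u + w - a)) (max (u + v - b) (v + w - c)), ?_, ?_, ?_, ?_, ?_, ?_, ?_, ?_⟩
    · exact le_max_of_le_left (le_max_left _ _)
    · exact le_max_of_le_left (le_max_right _ _)
    · exact le_max_of_le_right (le_max_left _ _)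
    · exact le_max_of_le_right (le_max_right _ _)
    all_goals
      refine max_le (max_le ?_ ?_) (max_le ?_ ?_) <;> linarith
  refine ⟨fun i j k => match i, j, k with
    | true, true, true => t
    | true, true, false => u - t
    | true, false, true => w - t
    | false, true, true => v - t
    | true, false, false => a - u - w + t
    | false, true, false => b - u - v + t
    | false, false, true => c - v - w + t
    | false, false, false => 1 - a - b - c + u + v + w - t, ?_, ?_, ?_, ?_, ?_, ?_, ?_, ?_⟩
  · rintro (_ | _) (_ | _) (_ | _) <;> simp only <;> linarith
  all_goals simp only; linarith

def bqG (z : ℕ → ℝ) : ℕ → Bool → ℝ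
  | 0, false => 0
  | 0, true => 1
  | k + 1, b => min (bqG z k b + z k) (bqG z k (!b) + 1 - z k)

lemma bqG_facts (x z : ℕ → ℝ) (k : ℕ) (hx : ∀ i ≤ k, 0 ≤ x i ∧ x i ≤ 1)
    (hz : ∀ i < k, |x i - x (i + 1)| ≤ z i ∧ z i ≤ x i + x (i + 1) ∧ z i ≤ 2 - x i - x (i + 1)) :
    1 ≤ bqG z k false + bqG z k true ∧ |x 0 - x k| ≤ bqG z k false ∧
      |1 - x 0 - x k| ≤ bqG z k true := by
  induction k with
  | zero =>
    have := hx 0 le_rfl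
    refine ⟨by simp [bqG], by simp [bqG], ?_⟩
    simp only [bqG, abs_le]
    constructor <;> linarith
  | succ k ih =>
    obtain ⟨h1, h2, h3⟩ := ih (fun i hi => hx i (by omega)) (fun i hi => hz i (by omega))
    obtain ⟨hz1, hz2, hz3⟩ := hz k (by omega)
    have hk := hx k (by omega)
    have hk1 := hx (k + 1) le_rfl
    simp only [bqG, abs_le, Bool.not_false, Bool.not_true, le_min_iff] at *
    have h2' : 0 ≤ bqG z k false := by linarith
    have h3' : 0 ≤ bqG z k true := by linarith
    refine ⟨?_, ⟨⟨?_, ?_⟩, ?_, ?_⟩, ⟨?_, ?_⟩, ?_, ?_⟩ 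
    · rcases min_choice (bqG z k false + z k) (bqG z k true + 1 - z k) with h | h <;>
      rcases min_choice (bqG z k true + z k) (bqG z k false + 1 - z k) with h' | h' <;>
      rw [h, h'] <;> linarith
    all_goals linarith

/-- Probability of disagreement of two bits. -/
def bqNe (a b : Bool) : ℝ := if a = b then 0 else 1

def bqB (a : Bool) : ℝ := if a then 1 else 0

lemma bq_sum_pair {Ω : Type} [Fintype Ω] (w : Ω → ℝ) (A B : Ω → Bool) (g : Bool → Bool → ℝ) :
    ∑ ω, w ω * g (A ω) (B ω) = ∑ a, ∑ b, (∑ ω, if A ω = a ∧ B ω = b then w ω else 0) * g a b := by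
  simp only [Fintype.sum_bool, Finset.sum_mul, ← Finset.sum_add_distrib]
  refine Finset.sum_congr rfl fun ω _ => ?_
  cases A ω <;> cases B ω <;> simp

lemma bq_path (x z : ℕ → ℝ) (k : ℕ) : ∀ (_ : ∀ i ≤ k, 0 ≤ x i ∧ x i ≤ 1)
    (_ : ∀ i < k, |x i - x (i + 1)| ≤ z i ∧ z i ≤ x i + x (i + 1) ∧ z i ≤ 2 - x i - x (i + 1))
    (r : ℝ) (_ : |x 0 - x k| ≤ r ∧ r ≤ x 0 + x k ∧ r ≤ 2 - x 0 - x k)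
    (_ : 1 - bqG z k true ≤ r) (_ : r ≤ bqG z k false),
    ∃ (Ω : Type) (_ : Fintype Ω) (w : Ω → ℝ) (X : ℕ → Ω → Bool), (∀ ω, 0 ≤ w ω) ∧
      ∑ ω, w ω = 1 ∧ (∀ i ≤ k, ∑ ω, w ω * bqB (X i ω) = x i) ∧
      (∀ i < k, ∑ ω, w ω * bqNe (X i ω) (X (i + 1) ω) = z i) ∧
      ∑ ω, w ω * bqNe (X 0 ω) (X k ω) = r := by
  induction k with
  | zero =>
    intro hx _ r _ h1 h2
    have := hx 0 le_rfl
    refine ⟨Bool, inferInstance, fun b => if b then x 0 else 1 - x 0, fun _ b => b, ?_, ?_, ?_, ?_, ?_⟩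
    · rintro (_ | _) <;> simp <;> linarith
    · simp
    · intro i hi
      obtain rfl : i = 0 := by omega
      simp [bqB]
    · intro i hi; omega
    · simp [bqG] at h1 h2
      simp [bqNe]
      linarith
  | succ k ih =>
    intro hx hz r hr h1 h2
    obtain ⟨f1, f2, f3⟩ := bqG_facts x z k (fun i hi => hx i (by omega)) (fun i hi => hz i (by omega))
    have hx0 := hx 0 (by omega)
    have hk := hx k (by omega)
    have hk1 := hx (k + 1) le_rfl
    have hzk := hz k (by omega)
    -- choose the chord
    obtain ⟨p, p1, p2, p3, p4, p5, p6, p7⟩ : ∃ p, |x 0 - x k| ≤ p ∧ |r - z k| ≤ p ∧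
        1 - bqG z k true ≤ p ∧ p ≤ min (x 0 + x k) (2 - x 0 - x k) ∧ p ≤ r + z k ∧ p ≤ 2 - r - z k ∧
        p ≤ bqG z k false := by
      simp only [bqG, Bool.not_true, Bool.not_false, le_min_iff, sub_le_comm (b := min _ _),
        abs_le] at *
      refine ⟨max (max (max (x 0 - x k) (x k - x 0)) (max (r - z k) (z k - r))) (1 - bqG z k true),
        ?_⟩
      refine ⟨⟨?_, ?_⟩, ⟨?_, ?_⟩, ?_, ⟨?_, ?_⟩, ?_, ?_, ?_⟩
      · rw [neg_le]; refine le_max_of_le_left (le_max_of_le_left (le_max_of_le_right (by linarith)))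
      · refine le_max_of_le_left (le_max_of_le_left (le_max_of_le_left (by linarith)))
      · rw [neg_le]; refine le_max_of_le_left (le_max_of_le_right (le_max_of_le_right (by linarith)))
      · refine le_max_of_le_left (le_max_of_le_right (le_max_of_le_left (by linarith)))
      · exact le_max_right _ _
      all_goals
        refine max_le (max_le (max_le ?_ ?_) (max_le ?_ ?_)) ?_ <;> linarith
    rw [le_min_iff] at p4
    obtain ⟨Ω, hΩ, w, X, w0, w1, wx, wz, wr⟩ := ih (fun i hi => hx i (by omega))
      (fun i hi => hz i (by omega)) p ⟨p1, p4.1, p4.2⟩ p3 p7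
    rw [abs_le] at p2
    obtain ⟨ν, ν0, m1, m2, m3, m4, n1, n2, n3⟩ := bq_tri (x 0) (x k) (x (k + 1)) p (z k) r
      ⟨p1, p4.1, p4.2⟩ hzk hr (by linarith) (by linarith) (by linarith) (by linarith)
    -- pair marginals
    set M : Bool → Bool → ℝ := fun a b => ∑ ω, if X 0 ω = a ∧ X k ω = b then w ω else 0 with hM
    have pair := bq_sum_pair w (X 0) (X k)
    have e0 : ∑ ω, w ω * bqB (X 0 ω) = x 0 := wx 0 (by omega)
    have e1 : ∑ ω, w ω * bqB (X k ω) = x k := wx k (by omega)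
    have e2 := pair (fun a _ => bqB a)
    have e3 := pair (fun _ b => bqB b)
    have e4 := pair bqNe
    have e5 := pair (fun _ _ => 1)
    rw [e0] at e2
    rw [e1] at e3
    rw [wr] at e4
    simp only [mul_one, w1] at e5
    have hMν : ∀ a b, M a b = ν a b true + ν a b false := by
      simp [bqB, bqNe] at e2 e3 e4 e5
      have q1 : M true true = (x 0 + x k - p) / 2 := by simp only [hM]; linarith
      have q2 : M true false = (x 0 - x k + p) / 2 := by simp only [hM]; linarith
      have q3 : M false true = (x k - x 0 + p) / 2 := by simp only [hM]; linarith
      have q4 : M false false = (2 - x 0 - x k - p) / 2 := by simp only [hM]; linarith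
      rintro (_ | _) (_ | _) <;> linarith
    have hwM : ∀ ω, M (X 0 ω) (X k ω) = 0 → w ω = 0 := by
      intro ω h
      have := (Finset.sum_eq_zero_iff_of_nonneg (fun ω _ => by split_ifs <;> simp [w0])).1 h ω
        (Finset.mem_univ _)
      simpa using this
    have hνM : ∀ a b c, M a b = 0 → ν a b c = 0 := by
      intro a b c h
      have := hMν a b
      have h1 := ν0 a b true
      have h2 := ν0 a b false
      cases c <;> linarith
    let w' : Ω × Bool → ℝ := fun q => w q.1 * (ν (X 0 q.1) (X k q.1) q.2 / M (X 0 q.1) (X k q.1))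
    have marg : ∀ f : Ω → ℝ, ∑ q : Ω × Bool, w' q * f q.1 = ∑ ω, w ω * f ω := by
      intro f
      rw [Fintype.sum_prod_type]
      refine Finset.sum_congr rfl fun ω _ => ?_
      simp only [Fintype.sum_bool, w']
      by_cases h : M (X 0 ω) (X k ω) = 0
      · simp [hwM ω h]
      · have : (ν (X 0 ω) (X k ω) true / M (X 0 ω) (X k ω)) + (ν (X 0 ω) (X k ω) false / M (X 0 ω) (X k ω)) = 1 := by
          rw [← add_div, ← hMν, div_self h]
        linear_combination w ω * f ω * this
    have marg2 : ∀ f : Bool → Bool → Bool → ℝ, ∑ q : Ω × Bool, w' q * f (X 0 q.1) (X k q.1) q.2 =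
        ∑ a, ∑ b, ∑ c, ν a b c * f a b c := by
      intro f
      rw [Fintype.sum_prod_type, Finset.sum_congr rfl (fun ω _ => ?_), pair (fun a b => ∑ c, ν a b c / M a b * f a b c)]
      · refine Finset.sum_congr rfl fun a _ => Finset.sum_congr rfl fun b _ => ?_
        change M a b * _ = _
        by_cases h : M a b = 0
        · simp [h, hνM]
        · rw [Finset.mul_sum]
          refine Finset.sum_congr rfl fun c _ => ?_
          field_simp
      · simp only [w', Finset.mul_sum, mul_assoc]
    refine ⟨Ω × Bool, inferInstance, w', fun i q => if i ≤ k then X i q.1 else q.2, ?_, ?_, ?_, ?_, ?_⟩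
    · intro q
      have : 0 ≤ M (X 0 q.1) (X k q.1) := by rw [hMν]; exact add_nonneg (ν0 _ _ _) (ν0 _ _ _)
      exact mul_nonneg (w0 _) (div_nonneg (ν0 _ _ _) this)
    · simpa [w1] using marg (fun _ => 1)
    · intro i hi
      rcases Nat.lt_or_ge k i with h | h
      · obtain rfl : i = k + 1 := by omega
        simp only [show ¬ (k + 1 ≤ k) by omega, if_false]
        rw [marg2 (fun _ _ c => bqB c)]
        simp [bqB]; linarith
      · simp only [h, if_true]
        rw [marg (fun ω => bqB (X i ω)), wx i h]
    · intro i hi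
      rcases Nat.lt_or_ge i k with h | h
      · simp only [h.le, show i + 1 ≤ k from h, if_true]
        rw [marg (fun ω => bqNe (X i ω) (X (i + 1) ω)), wz i h]
      · obtain rfl : i = k := by omega
        simp only [show ¬ (i + 1 ≤ i) by omega, if_false, le_refl, if_true]
        rw [marg2 (fun _ b c => bqNe b c)]
        simp [bqNe]; linarith
    · simp only [show ¬ (k + 1 ≤ k) by omega, if_false, Nat.zero_le, if_true]
      rw [marg2 (fun a _ c => bqNe a c)]
      simp [bqNe]; linarith

lemma bqG_attained (z : ℕ → ℝ) (h0 : 0 ≤ z 0 ∧ z 0 ≤ 1) (k : ℕ) : ∀ b, ∃ s : ℕ → Bool, s 0 = false ∧ s (k + 1) = b ∧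
    ∑ i ∈ Finset.range (k + 1), (if s i = s (i + 1) then z i else 1 - z i) ≤ bqG z (k + 1) b := by
  induction k with
  | zero =>
    intro b
    refine ⟨fun i => if i = 0 then false else b, by simp, by simp, ?_⟩
    cases b <;> simp [bqG] <;> linarith
  | succ k ih =>
    intro b
    rw [bqG]
    have key : ∀ c, ∃ s : ℕ → Bool, s 0 = false ∧ s (k + 2) = b ∧
        ∑ i ∈ Finset.range (k + 2), (if s i = s (i + 1) then z i else 1 - z i) ≤
          bqG z (k + 1) c + (if c = b then z (k + 1) else 1 - z (k + 1)) := by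
      intro c
      obtain ⟨s, s0, s1, hs⟩ := ih c
      refine ⟨fun i => if i ≤ k + 1 then s i else b, by simp [s0], by simp, ?_⟩
      rw [Finset.sum_range_succ]
      refine add_le_add ?_ (by simp [s1])
      refine le_trans (le_of_eq ?_) hs
      refine Finset.sum_congr rfl fun i hi => ?_
      have := Finset.mem_range.1 hi
      simp [show i ≤ k + 1 by omega, show i ≤ k by omega]
    rcases min_choice (bqG z (k+1) b + z (k+1)) (bqG z (k+1) (!b) + 1 - z (k+1)) with h | h <;> rw [h]
    · simpa using key b
    · have := key (!b)
      simpa [add_sub_assoc] using this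

/-! ### Inequality description -/

/-- The McCormick relaxation in cyclic coordinates. -/
def bqQ (n : ℕ) : Set ((Fin (n + 1) → ℝ) × (Fin (n + 1) → ℝ)) :=
  {p | ∀ i, 0 ≤ p.2 i ∧ p.2 i ≤ p.1 i ∧ p.2 i ≤ p.1 (i + 1) ∧ p.1 i + p.1 (i + 1) - 1 ≤ p.2 i}

def bqZ {n : ℕ} (p : (Fin (n + 1) → ℝ) × (Fin (n + 1) → ℝ)) (i : Fin (n + 1)) : ℝ :=
  p.1 i + p.1 (i + 1) - 2 * p.2 i

def bqZs {n : ℕ} (s : Fin (n + 1) → Bool) (p : (Fin (n + 1) → ℝ) × (Fin (n + 1) → ℝ))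
    (i : Fin (n + 1)) : ℝ :=
  if s i = s (i + 1) then bqZ p i else 1 - bqZ p i

def bqV {n : ℕ} (s : Fin (n + 1) → Bool) : Set ((Fin (n + 1) → ℝ) × (Fin (n + 1) → ℝ)) :=
  {p | p ∈ bqQ n ∧ ∑ i : Fin n, bqZs s p i.castSucc < bqZs s p (Fin.last n)}

def bqP (n : ℕ) : Set ((Fin (n + 1) → ℝ) × (Fin (n + 1) → ℝ)) :=
  {p | p ∈ bqQ n ∧ ∀ s : Fin (n + 1) → Bool,
    bqZs s p (Fin.last n) ≤ ∑ i : Fin n, bqZs s p i.castSucc}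

lemma bqZs_comb {n : ℕ} (s : Fin (n + 1) → Bool) (p q : (Fin (n + 1) → ℝ) × (Fin (n + 1) → ℝ))
    (i : Fin (n + 1)) (a b : ℝ) (h : a + b = 1) :
    bqZs s (a • p + b • q) i = a * bqZs s p i + b * bqZs s q i := by
  unfold bqZs
  split_ifs
  · simp [bqZ]; ring
  · simp [bqZ]; linear_combination - h

lemma bqP_convex (n : ℕ) : Convex ℝ (bqP n) := by
  rintro p ⟨hp1, hp2⟩ q ⟨hq1, hq2⟩ a b ha hb hab
  refine ⟨fun i => ?_, fun s => ?_⟩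
  · obtain ⟨p1, p2, p3, p4⟩ := hp1 i
    obtain ⟨q1, q2, q3, q4⟩ := hq1 i
    simp only [Prod.fst_add, Prod.snd_add, Prod.smul_fst, Prod.smul_snd, Pi.add_apply, Pi.smul_apply,
      smul_eq_mul]
    refine ⟨?_, ?_, ?_, ?_⟩
    · positivity
    · nlinarith
    · nlinarith
    · nlinarith
  · simp only [bqZs_comb s p q _ a b hab, Finset.sum_add_distrib, ← Finset.mul_sum]
    exact add_le_add (mul_le_mul_of_nonneg_left (hp2 s) ha) (mul_le_mul_of_nonneg_left (hq2 s) hb)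

lemma bq_xor_path (n : ℕ) (t : Fin (n + 1) → Bool) :
    bqNe (t (Fin.last n)) (t 0) ≤ ∑ i : Fin n, bqNe (t i.castSucc) (t i.succ) := by
  induction n with
  | zero => simp [bqNe]
  | succ n ih =>
    have := ih (fun i => t i.castSucc)
    rw [Fin.sum_univ_castSucc]
    simp only [Fin.succ_last, Fin.succ_castSucc, Fin.castSucc_zero] at *
    have h2 : bqNe (t (Fin.last (n+1))) (t 0) ≤ bqNe (t (Fin.last n).castSucc) (t 0) +
      bqNe (t (Fin.last n).castSucc) (t (Fin.last (n + 1))) := by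
      unfold bqNe
      cases t (Fin.last (n+1)) <;> cases t 0 <;> cases t (Fin.last n).castSucc <;> simp
    simp only [Nat.succ_eq_add_one] at *
    linarith

lemma bqP_integral (n : ℕ) (X : Fin (n + 1) → Bool) :
    ((fun i => bqB (X i)), (fun i => bqB (X i) * bqB (X (i + 1)))) ∈ bqP n := by
  refine ⟨fun i => ?_, fun s => ?_⟩
  · simp only [bqB]
    split_ifs <;> norm_num
  · have h : ∀ i, bqZs s ((fun i => bqB (X i)), (fun i => bqB (X i) * bqB (X (i + 1)))) i =
      bqNe (xor (X i) (s i)) (xor (X (i + 1)) (s (i + 1))) := by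
      intro i
      simp only [bqZs, bqZ, bqB, bqNe]
      cases X i <;> cases s i <;> cases X (i + 1) <;> cases s (i + 1) <;> norm_num
    simp only [h, Fin.last_add_one, Fin.coeSucc_eq_succ]
    exact bq_xor_path n (fun i => xor (X i) (s i))

lemma bq_z_nonneg {n : ℕ} {p : (Fin (n + 1) → ℝ) × (Fin (n + 1) → ℝ)} (hp : p ∈ bqQ n) (i) :
    0 ≤ bqZ p i ∧ bqZ p i ≤ 1 := by
  obtain ⟨h1, h2, h3, h4⟩ := hp i
  unfold bqZ
  constructor <;> linarith

lemma bq_x_bounds {n : ℕ} {p : (Fin (n + 1) → ℝ) × (Fin (n + 1) → ℝ)} (hp : p ∈ bqQ n) (i) :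
    0 ≤ p.1 i ∧ p.1 i ≤ 1 := by
  obtain ⟨h1, h2, h3, h4⟩ := hp i
  obtain ⟨h1', h2', h3', h4'⟩ := hp (i - 1)
  rw [sub_add_cancel] at *
  constructor <;> linarith

/-- every point of `bqP` is a mixture of integral points -/
lemma bqP_mix (k : ℕ) {p : (Fin (k + 2) → ℝ) × (Fin (k + 2) → ℝ)} (hp : p ∈ bqP (k + 1)) :
    ∃ (Ω : Type) (_ : Fintype Ω) (w : Ω → ℝ) (X : Fin (k + 2) → Ω → Bool), (∀ ω, 0 ≤ w ω) ∧
      ∑ ω, w ω = 1 ∧ (∀ i, ∑ ω, w ω * bqB (X i ω) = p.1 i) ∧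
      (∀ i, ∑ ω, w ω * (bqB (X i ω) * bqB (X (i + 1) ω)) = p.2 i) := by
  obtain ⟨hQ, hs⟩ := hp
  set x : ℕ → ℝ := fun i => p.1 (Fin.ofNat (k + 2) i) with hx
  set z : ℕ → ℝ := fun i => bqZ p (Fin.ofNat (k + 2) i) with hz
  have hof : ∀ i : Fin (k + 2), Fin.ofNat (k + 2) (i : ℕ) = i := fun i => by simp
  have hsucc : ∀ i : ℕ, Fin.ofNat (k + 2) (i + 1) = Fin.ofNat (k + 2) i + 1 := fun i => by
    ext; simp [Fin.val_add]
  have hlast : Fin.ofNat (k + 2) (k + 1) = Fin.last (k + 1) := by ext; simp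
  have hmc : ∀ j, |p.1 j - p.1 (j + 1)| ≤ bqZ p j ∧ bqZ p j ≤ p.1 j + p.1 (j + 1) ∧
      bqZ p j ≤ 2 - p.1 j - p.1 (j + 1) := by
    intro j
    obtain ⟨h1, h2, h3, h4⟩ := hQ j
    rw [abs_le]
    unfold bqZ
    refine ⟨⟨?_, ?_⟩, ?_, ?_⟩ <;> linarith
  have hG : ∀ s : ℕ → Bool, s 0 = false → 
      (if s (k + 1) = s 0 then bqZ p (Fin.last (k + 1)) else 1 - bqZ p (Fin.last (k + 1))) ≤
      ∑ i ∈ Finset.range (k + 1), (if s i = s (i + 1) then z i else 1 - z i) := by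
    intro s s0
    have := hs (fun i => s i)
    rw [Finset.sum_range]
    simp only [bqZs, Fin.last_add_one, Fin.coeSucc_eq_succ] at this
    refine le_trans (le_of_eq (by simp only [Fin.val_last]; rfl)) (le_trans this (le_of_eq ?_))
    refine Finset.sum_congr rfl fun i _ => ?_
    simp [hz]
  have hz0 : 0 ≤ z 0 ∧ z 0 ≤ 1 := bq_z_nonneg hQ _
  have hl := hmc (Fin.last (k + 1))
  rw [Fin.last_add_one, abs_sub_comm] at hl
  obtain ⟨Ω, hΩ, w, X, w0, w1, wx, wz, wr⟩ := bq_path x z (k + 1) (fun i _ => bq_x_bounds hQ _)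
    (fun i _ => by simp only [hx, hz, hsucc]; exact hmc _) (bqZ p (Fin.last (k + 1)))
    (by
      simp only [hx, hlast]
      refine ⟨hl.1, ?_, ?_⟩
      · simpa [add_comm] using hl.2.1
      · have := hl.2.2
        simp only [Fin.ofNat_zero] 
        linarith)
    (by
      obtain ⟨s, s0, s1, h⟩ := bqG_attained z hz0 k true
      have := hG s s0
      rw [s1, s0] at this
      simp only [reduceCtorEq, if_false] at this
      linarith)
    (by
      obtain ⟨s, s0, s1, h⟩ := bqG_attained z hz0 k false
      have := hG s s0
      rw [s1, s0] at this
      simp only [if_true] at this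
      linarith)
  have hprod : ∀ a b : Bool, bqB a * bqB b = (bqB a + bqB b - bqNe a b) / 2 := by
    intro a b; cases a <;> cases b <;> simp [bqB, bqNe]
  have hX : ∀ i : Fin (k + 2), ∑ ω, w ω * bqB (X i ω) = p.1 i := by
    intro i
    rw [wx i (by omega)]
    simp [hx]
  refine ⟨Ω, hΩ, w, fun i => X i, w0, w1, hX, ?_⟩
  intro i
  have e : ∀ a b : Ω → Bool, ∑ ω, w ω * (bqB (a ω) * bqB (b ω)) =
      (∑ ω, w ω * bqB (a ω) + ∑ ω, w ω * bqB (b ω) - ∑ ω, w ω * bqNe (a ω) (b ω)) / 2 := by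
    intro a b
    rw [← Finset.sum_add_distrib, ← Finset.sum_sub_distrib, Finset.sum_div]
    refine Finset.sum_congr rfl fun ω _ => ?_
    rw [hprod]; ring
  rw [e, hX, hX]
  have : ∑ ω, w ω * bqNe (X i ω) (X (i + 1 : Fin (k + 2)) ω) = bqZ p i := by
    induction i using Fin.lastCases with
    | last =>
      rw [Fin.last_add_one]
      rw [← wr]
      refine Finset.sum_congr rfl fun ω _ => ?_
      simp [bqNe, eq_comm]
    | cast i =>
      have := wz i (by omega)
      rw [Fin.coeSucc_eq_succ]
      simp only [hz] at this
      simp only [Fin.val_castSucc, Fin.val_succ]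
      rw [this]
      congr 1
      ext; simp
  rw [this]; unfold bqZ; ring

/-! ### Edges of the cycle -/

lemma bq_adj (n : ℕ) (hn : 2 ≤ n) (i j : Fin (n + 1)) :
    (cycleG (n + 1)).Adj i j ↔ j = i + 1 ∨ i = j + 1 := by
  have h1 : ∀ i j : Fin (n + 1), ((i : ℕ) + 1) % (n + 1) = (j : ℕ) ↔ j = i + 1 := by
    intro i j
    rw [Fin.ext_iff, Fin.val_add, Fin.val_one', Nat.add_mod_mod]
    exact eq_comm
  have h2 : ∀ i : Fin (n + 1), i ≠ i + 1 := by
    intro i h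
    have : (1 : Fin (n + 1)) = 0 := by
      have := congrArg (· - i) h
      simpa using this.symm
    rw [Fin.ext_iff, Fin.val_one', Fin.val_zero, Nat.mod_eq_of_lt (by omega)] at this
    omega
  unfold cycleG
  rw [SimpleGraph.fromRel_adj, h1, h1]
  constructor
  · exact fun h => h.2
  · intro h
    refine ⟨?_, h⟩
    rcases h with h | h
    · rw [h]; exact h2 i
    · rw [h]; exact (h2 j).symm

def bqE (n : ℕ) (hn : 2 ≤ n) (i : Fin (n + 1)) : (cycleG (n + 1)).edgeSet :=
  ⟨s(i, i + 1), (SimpleGraph.mem_edgeSet _).mpr ((bq_adj n hn i (i + 1)).2 (Or.inl rfl))⟩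

lemma bqE_bij (n : ℕ) (hn : 2 ≤ n) : Function.Bijective (bqE n hn) := by
  constructor
  · intro i j h
    simp only [bqE, Subtype.mk.injEq, Sym2.eq_iff] at h
    rcases h with h | ⟨h1, h2⟩
    · exact h.1
    · exfalso
      rw [h1] at h2
      have : (1 + 1 : Fin (n + 1)) = 0 := by
        have := congrArg (· - j) h2
        simp [add_assoc] at this
        exact this
      rw [Fin.ext_iff, Fin.val_add, Fin.val_one', Fin.val_zero, ← Nat.add_mod, Nat.mod_eq_of_lt (by omega)] at this
      omega
  · rintro ⟨e, he⟩
    induction e using Sym2.ind with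
    | _ i j =>
      rcases (bq_adj n hn i j).1 ((SimpleGraph.mem_edgeSet _).1 he) with h | h
      · exact ⟨i, by simp [bqE, h]⟩
      · exact ⟨j, by simp [bqE, h, Sym2.eq_swap]⟩

def bqEquiv (n : ℕ) (hn : 2 ≤ n) : Fin (n + 1) ≃ (cycleG (n + 1)).edgeSet :=
  Equiv.ofBijective _ (bqE_bij n hn)

def bqPsi (n : ℕ) (hn : 2 ≤ n) (p : (Fin (n + 1) → ℝ) × ((cycleG (n + 1)).edgeSet → ℝ)) :
    (Fin (n + 1) → ℝ) × (Fin (n + 1) → ℝ) :=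
  (p.1, fun i => p.2 (bqE n hn i))

lemma bqPsi_mp (n : ℕ) (hn : 2 ≤ n) : MeasurePreserving (bqPsi n hn) volume volume := by
  have h := (volume_measurePreserving_piCongrLeft (fun _ => ℝ) (bqEquiv n hn)).symm
  refine MeasurePreserving.prod (MeasurePreserving.id volume) 
    (g := fun (y : (cycleG (n + 1)).edgeSet → ℝ) (i : Fin (n + 1)) => y (bqE n hn i)) ?_
  have e : (fun (y : (cycleG (n + 1)).edgeSet → ℝ) (i : Fin (n + 1)) => y (bqE n hn i)) =
      (MeasurableEquiv.piCongrLeft (fun _ => ℝ) (bqEquiv n hn)).symm := rfl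
  rw [e]
  exact h

lemma bqBQP_eq (n : ℕ) (hn : 2 ≤ n) : BQPSet (cycleG (n + 1)) = bqPsi n hn ⁻¹' bqP n := by
  apply Set.Subset.antisymm
  · refine convexHull_min ?_ ?_
    · rintro ⟨x, y⟩ ⟨h1, h2⟩
      simp only at h1 h2
      have hx : ∀ i, x i = bqB (decide (x i = 1)) := by
        intro i
        rcases h1 i with h | h <;> simp [bqB, h]
      have hy : ∀ i, y (bqE n hn i) = bqB (decide (x i = 1)) * bqB (decide (x (i + 1) = 1)) := by
        intro i
        rw [← hx, ← hx]
        exact h2 i (i + 1) ((bq_adj n hn i (i + 1)).2 (Or.inl rfl))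
      have := bqP_integral n (fun i => decide (x i = 1))
      simp only [Set.mem_preimage, bqPsi, hy]
      convert this using 2
      exact funext hx
    · have : IsLinearMap ℝ (bqPsi n hn) := ⟨fun _ _ => rfl, fun _ _ => rfl⟩
      exact (bqP_convex n).is_linear_preimage this
  · rintro ⟨x, y⟩ hp
    obtain ⟨k, rfl⟩ : ∃ k, n = k + 1 := ⟨n - 1, by omega⟩
    obtain ⟨Ω, hΩ, w, X, w0, w1, wx, wy⟩ := bqP_mix k hp
    simp only [bqPsi] at wx wy
    let pt : Ω → (Fin (k + 2) → ℝ) × ((cycleG (k + 2)).edgeSet → ℝ) := fun ω =>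
      (fun i => bqB (X i ω), fun e => bqB (X ((bqEquiv (k+1) hn).symm e) ω) *
        bqB (X ((bqEquiv (k+1) hn).symm e + 1) ω))
    have hsum : ((x, y) : (Fin (k + 2) → ℝ) × ((cycleG (k + 2)).edgeSet → ℝ)) = ∑ ω, w ω • pt ω := by
      refine Prod.ext ?_ ?_
      · ext i
        rw [Prod.fst_sum, Finset.sum_apply]
        exact (wx i).symm
      · ext e
        rw [Prod.snd_sum, Finset.sum_apply]
        obtain ⟨i, rfl⟩ := (bqEquiv (k+1) hn).surjective e
        simp only [pt, Prod.smul_snd, Pi.smul_apply, smul_eq_mul, Equiv.symm_apply_apply]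
        exact (wy i).symm
    rw [hsum]
    refine (convex_convexHull ℝ _).sum_mem (fun ω _ => w0 ω) w1 (fun ω _ => subset_convexHull ℝ _ ?_)
    refine ⟨fun i => ?_, ?_⟩
    · simp only [pt, bqB]; split_ifs <;> simp
    · have key : ∀ i, (pt ω).2 (bqE (k+1) hn i) = (pt ω).1 i * (pt ω).1 (i + 1) := by
        intro i
        have : (bqEquiv (k+1) hn).symm (bqE (k+1) hn i) = i :=
          (bqEquiv (k+1) hn).symm_apply_apply i
        simp only [pt, this]
      intro i j h
      rcases (bq_adj (k+1) hn i j).1 h with rfl | rfl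
      · exact key i
      · rw [mul_comm, ← key j]
        simp [bqE, Sym2.eq_swap]

/-! ### Part B: the simplices that are cut off -/

lemma bq_simplex_fin (k : ℕ) : ∀ t : ℝ, 0 < t →
    volume {a : Fin k → ℝ | (∀ i, 0 ≤ a i) ∧ ∑ i, a i < t} =
      ENNReal.ofReal (t ^ k / (Nat.factorial k : ℝ)) := by
  induction k with
  | zero =>
    intro t ht
    have : {a : Fin 0 → ℝ | (∀ i, 0 ≤ a i) ∧ ∑ i, a i < t} = Set.univ := by
      ext a; simp [ht]
    rw [this, volume_pi, Measure.pi_of_empty]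
    simp
  | succ k ih =>
    intro t ht
    have hmp := (volume_preserving_piFinSuccAbove (fun _ : Fin (k + 1) => ℝ) 0)
    set T : Set (ℝ × (Fin k → ℝ)) := {q | 0 ≤ q.1 ∧ (∀ i, 0 ≤ q.2 i) ∧ q.1 + ∑ i, q.2 i < t} with hT
    have hTm : MeasurableSet T := by
      have e : T = {q | 0 ≤ q.1} ∩ ((⋂ i, {q | 0 ≤ q.2 i}) ∩ {q | q.1 + ∑ i, q.2 i < t}) := by
        ext q; simp [hT]
      rw [e]
      refine (measurableSet_le measurable_const measurable_fst).inter
        ((MeasurableSet.iInter fun i => measurableSet_le measurable_const (by fun_prop)).inter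
        (measurableSet_lt (by fun_prop) measurable_const))
    have hpre : {a : Fin (k + 1) → ℝ | (∀ i, 0 ≤ a i) ∧ ∑ i, a i < t} =
        (MeasurableEquiv.piFinSuccAbove (fun _ : Fin (k + 1) => ℝ) 0) ⁻¹' T := by
      ext a
      simp only [hT, Set.mem_ofPred_eq, Set.mem_preimage, Fin.forall_fin_succ, Fin.sum_univ_succ, and_assoc]
      rfl
    rw [hpre, hmp.measure_preimage hTm.nullMeasurableSet, Measure.volume_eq_prod,
      Measure.prod_apply hTm]
    have hfib : ∀ s : ℝ, volume (Prod.mk s ⁻¹' T) =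
        (Set.Ico 0 t).indicator (fun s => ENNReal.ofReal ((t - s) ^ k / (Nat.factorial k : ℝ))) s := by
      intro s
      by_cases hs : s ∈ Set.Ico 0 t
      · rw [Set.indicator_of_mem hs, ← ih (t - s) (by linarith [hs.2])]
        congr 1
        ext a
        simp only [hT, Set.mem_preimage, Set.mem_ofPred_eq, hs.1, true_and, lt_sub_iff_add_lt']
      · rw [Set.indicator_of_notMem hs]
        convert measure_empty (μ := (volume : Measure (Fin k → ℝ)))
        ext a
        simp only [hT, Set.mem_preimage, Set.mem_ofPred_eq, Set.mem_empty_iff_false, iff_false]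
        rintro ⟨h1, h2, h3⟩
        have := Finset.sum_nonneg (fun i (_ : i ∈ Finset.univ) => h2 i)
        exact hs ⟨h1, by linarith⟩
    simp_rw [hfib]
    rw [lintegral_indicator measurableSet_Ico, Measure.restrict_congr_set Ico_ae_eq_Ioc,
      ← ofReal_integral_eq_lintegral_ofReal]
    · rw [← intervalIntegral.integral_of_le ht.le]
      congr 1
      rw [intervalIntegral.integral_comp_sub_left (fun s => s ^ k / (Nat.factorial k : ℝ)) t]
      simp only [sub_self, sub_zero, intervalIntegral.integral_div, integral_pow]
      rw [Nat.factorial_succ]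
      push_cast
      field_simp
      simp
    · apply Continuous.integrableOn_Ioc
      fun_prop
    · filter_upwards [ae_restrict_mem measurableSet_Ioc] with s hs
      have : 0 ≤ t - s := by linarith [hs.2]
      positivity

lemma bq_simplex (ι : Type) [Fintype ι] :
    volume {a : ι → ℝ | (∀ i, 0 ≤ a i) ∧ ∑ i, a i < 1} =
      ENNReal.ofReal (1 / (Nat.factorial (Fintype.card ι) : ℝ)) := by
  have h := (volume_measurePreserving_piCongrLeft (fun _ => ℝ) (Fintype.equivFin ι).symm).symm
  have h1 := bq_simplex_fin (Fintype.card ι) 1 one_pos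
  rw [one_pow] at h1
  rw [← h1]
  rw [← h.measure_preimage_equiv]
  congr 1
  ext a
  simp only [Set.mem_ofPred_eq, Set.mem_preimage]
  change _ ↔ (∀ i, 0 ≤ a ((Fintype.equivFin ι).symm i)) ∧ ∑ i, a ((Fintype.equivFin ι).symm i) < 1
  rw [Equiv.sum_comp, Equiv.forall_congr_left (Fintype.equivFin ι)]

def bqS (m : ℕ) : Set ((Fin m → ℝ) × (Fin m → ℝ)) :=
  {p | (∀ i, 0 ≤ p.1 i) ∧ (∀ i, 0 ≤ p.2 i) ∧ ∑ i, p.1 i + ∑ i, p.2 i < 1}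

lemma bqS_meas (m : ℕ) : MeasurableSet (bqS m) := by
  have e : bqS m = (⋂ i, {q | 0 ≤ q.1 i}) ∩ ((⋂ i, {q | 0 ≤ q.2 i}) ∩
      {q | ∑ i, q.1 i + ∑ i, q.2 i < 1}) := by
    ext q; simp [bqS]
  rw [e]
  exact (MeasurableSet.iInter fun i => measurableSet_le measurable_const (by fun_prop)).inter
    ((MeasurableSet.iInter fun i => measurableSet_le measurable_const (by fun_prop)).inter
        (measurableSet_lt (by fun_prop) measurable_const))

lemma bqS_vol (m : ℕ) : volume (bqS m) = ENNReal.ofReal (1 / (Nat.factorial (2 * m) : ℝ)) := by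
  have h := volume_measurePreserving_sumPiEquivProdPi (fun _ : Fin m ⊕ Fin m => ℝ)
  have h2 := bq_simplex (Fin m ⊕ Fin m)
  rw [Fintype.card_sum, Fintype.card_fin, ← two_mul] at h2
  rw [← h2, ← h.measure_preimage (bqS_meas m).nullMeasurableSet]
  congr 1
  ext a
  simp [bqS, and_assoc]
  rfl

/-! determinant -/

def bqMB (n : ℕ) : Matrix (Fin (n + 1)) (Fin (n + 1)) ℝ :=
  Matrix.of fun i j => (if j = i then 1 else 0) - (if i ≠ Fin.last n then (if j = i + 1 then 1 else 0) else 0)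

def bqMA (n : ℕ) : Matrix (Fin (n + 1)) (Fin (n + 1)) ℝ :=
  Matrix.of fun i j => (if j = i then -1 else 0) - (if i = Fin.last n then 1 else 0)

lemma bqMB_det (n : ℕ) : (bqMB n).det = 1 := by
  rw [Matrix.det_of_isUpperTriangular]
  · refine Finset.prod_eq_one fun i _ => ?_
    induction i using Fin.lastCases with
    | last => simp [bqMB]
    | cast i =>
      simp [bqMB, Fin.castSucc_ne_last, Fin.coeSucc_eq_succ, (Fin.castSucc_lt_succ (i := i)).ne]
  · intro i j hij
    simp only [id] at hij
    induction i using Fin.lastCases with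
    | last => simp [bqMB, hij.ne]
    | cast i =>
      have : j ≠ i.succ := (hij.trans (Fin.castSucc_lt_succ (i := i))).ne
      simp [bqMB, hij.ne, this]

lemma bqMA_det (n : ℕ) : |(bqMA n).det| = 2 := by
  rw [Matrix.det_of_isLowerTriangular]
  · rw [Fin.prod_univ_castSucc]
    simp [bqMA, Fin.castSucc_ne_last, abs_mul]
    norm_num
  · intro i j hij
    have hij : i < j := hij
    have : i ≠ Fin.last n := (lt_of_lt_of_le hij (Fin.le_last j)).ne
    simp [bqMA, hij.ne', this]

lemma bq_telescope (n : ℕ) (x : Fin (n + 1) → ℝ) :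
    ∑ i : Fin n, (x i.castSucc - x i.succ) = x 0 - x (Fin.last n) := by
  have := Fin.sum_univ_succ x
  have h2 := Fin.sum_univ_castSucc x
  rw [Finset.sum_sub_distrib]
  linarith

lemma bqM_apply (n : ℕ) (x : Fin (n + 1) → ℝ) (i : Fin (n + 1)) :
    Matrix.toLin' (bqMA n * bqMB n) x i =
      if i = Fin.last n then - (x (Fin.last n) + x 0) else x (i + 1) - x i := by
  rw [Matrix.toLin'_mul_apply, Matrix.toLin'_apply, Matrix.toLin'_apply]
  have hB : ∀ i, (bqMB n).mulVec x i = x i - if i = Fin.last n then 0 else x (i + 1) := by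
    intro i
    simp only [Matrix.mulVec, dotProduct, bqMB, Matrix.of_apply, sub_mul, Finset.sum_sub_distrib]
    by_cases h : i = Fin.last n <;> simp [h]
  have hA : ∀ c i, (bqMA n).mulVec c i = - c i - if i = Fin.last n then ∑ j, c j else 0 := by
    intro c i
    simp only [Matrix.mulVec, dotProduct, bqMA, Matrix.of_apply, sub_mul, Finset.sum_sub_distrib]
    by_cases h : i = Fin.last n <;> simp [h]
  rw [hA]
  simp only [hB]
  by_cases h : i = Fin.last n
  · have := bq_telescope n x
    simp only [h, if_true]
    rw [Fin.sum_univ_castSucc]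
    simp only [Fin.castSucc_ne_last, if_false, if_true, Fin.coeSucc_eq_succ, this]
    ring
  · simp [h]

def bqShift (n : ℕ) (a : Fin (n + 1) → ℝ) : Fin (n + 1) → ℝ := fun i =>
  if i = Fin.last n then 1 + a i else a i

def bqD (n : ℕ) (a x : Fin (n + 1) → ℝ) : Fin (n + 1) → ℝ :=
  Matrix.toLin' (bqMA n * bqMB n) x + bqShift n a

lemma bqShift_cont (n : ℕ) : Continuous (bqShift n) := by
  refine continuous_pi fun i => ?_
  unfold bqShift
  split_ifs <;> fun_prop

lemma bqD_map (n : ℕ) (a : Fin (n + 1) → ℝ) :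
    Measure.map (bqD n a) volume = (ENNReal.ofReal (1/2)) • (volume : Measure (Fin (n + 1) → ℝ)) := by
  have hd : |(bqMA n * bqMB n).det| = 2 := by
    rw [Matrix.det_mul, bqMB_det, mul_one, bqMA_det]
  have hne : (bqMA n * bqMB n).det ≠ 0 := by
    intro h; rw [h] at hd; simp at hd
  have h1 := Real.map_matrix_volume_pi_eq_smul_volume_pi hne
  rw [abs_inv, hd] at h1
  have h2 : bqD n a = (fun v => v + bqShift n a) ∘ (Matrix.toLin' (bqMA n * bqMB n)) := rfl
  have hc : Continuous (Matrix.toLin' (bqMA n * bqMB n)) := LinearMap.continuous_of_finiteDimensional _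
  rw [h2, ← Measure.map_map (by fun_prop) hc.measurable, h1, Measure.map_smul,
    (measurePreserving_add_right volume (bqShift n a)).map_eq]
  norm_num

/-- first shear -/
def bqA1 (n : ℕ) (x y : Fin (n + 1) → ℝ) : Fin (n + 1) → ℝ := fun i =>
  if i = Fin.last n then y i else x i - y i

def bqTh (n : ℕ) (p : (Fin (n + 1) → ℝ) × (Fin (n + 1) → ℝ)) :
    (Fin (n + 1) → ℝ) × (Fin (n + 1) → ℝ) :=
  (bqA1 n p.1 p.2, bqD n (bqA1 n p.1 p.2) p.1)

lemma bqTh_mp (n : ℕ) : MeasurePreserving (bqTh n) volume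
    ((volume : Measure (Fin (n + 1) → ℝ)).prod (ENNReal.ofReal (1/2) • volume)) := by
  have s1 : MeasurePreserving (fun p : (Fin (n + 1) → ℝ) × (Fin (n + 1) → ℝ) =>
      (p.1, bqA1 n p.1 p.2)) (volume.prod volume) (volume.prod volume) := by
    refine MeasurePreserving.skew_product (MeasurePreserving.id volume) (g := bqA1 n) ?_ ?_
    · apply Continuous.measurable
      refine continuous_pi fun i => ?_
      simp only [Function.uncurry, bqA1]
      split_ifs <;> fun_prop
    · refine Eventually.of_forall fun x => ?_
      refine (volume_preserving_pi (f := fun i y => if i = Fin.last n then y else x i - y) ?_).map_eq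
      intro i
      split_ifs
      · exact MeasurePreserving.id _
      · exact Measure.measurePreserving_sub_left volume (x i)
  have s2 : MeasurePreserving (fun p : (Fin (n + 1) → ℝ) × (Fin (n + 1) → ℝ) =>
      (p.1, bqD n p.1 p.2)) (volume.prod volume) (volume.prod (ENNReal.ofReal (1/2) • volume)) := by
    refine MeasurePreserving.skew_product (MeasurePreserving.id volume) (g := bqD n) ?_ ?_
    · have hc : Continuous (Matrix.toLin' (bqMA n * bqMB n)) := LinearMap.continuous_of_finiteDimensional _
      apply Continuous.measurable
      exact (hc.comp continuous_snd).add ((bqShift_cont n).comp continuous_fst)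
    · exact Eventually.of_forall fun a => bqD_map n a
  have sw : MeasurePreserving (Prod.swap : (Fin (n + 1) → ℝ) × (Fin (n + 1) → ℝ) → _)
      (volume.prod volume) (volume.prod volume) := Measure.measurePreserving_swap
  exact s2.comp (sw.comp s1)

lemma bqQ_meas (n : ℕ) : MeasurableSet (bqQ n) := by
  have e : bqQ n = ⋂ i, ({p | 0 ≤ p.2 i} ∩ ({p | p.2 i ≤ p.1 i} ∩ ({p | p.2 i ≤ p.1 (i + 1)} ∩
      {p | p.1 i + p.1 (i + 1) - 1 ≤ p.2 i}))) := by
    ext q; simp [bqQ]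
  rw [e]
  refine MeasurableSet.iInter fun i => ?_
  refine (measurableSet_le (by fun_prop) (by fun_prop)).inter
    ((measurableSet_le (by fun_prop) (by fun_prop)).inter
    ((measurableSet_le (by fun_prop) (by fun_prop)).inter
    (measurableSet_le (by fun_prop) (by fun_prop))))

lemma bqZs_meas {n : ℕ} (s : Fin (n + 1) → Bool) (i : Fin (n + 1)) :
    Measurable (fun p => bqZs s p i) := by
  unfold bqZs bqZ
  split_ifs <;> fun_prop

lemma bqV_meas {n : ℕ} (s : Fin (n + 1) → Bool) : MeasurableSet (bqV s) :=
  (bqQ_meas n).inter (measurableSet_lt (Finset.measurable_sum _ fun i _ => bqZs_meas s _)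
    (bqZs_meas s _))

lemma bq_path_dist (n : ℕ) (x : Fin (n + 1) → ℝ) (z : Fin n → ℝ)
    (h : ∀ i : Fin n, |x i.castSucc - x i.succ| ≤ z i) :
    |x 0 - x (Fin.last n)| ≤ ∑ i, z i ∧
    ∀ i : Fin n, |x 0 - x i.castSucc| + |x i.succ - x (Fin.last n)| + z i ≤ ∑ i, z i := by
  set f : ℕ → ℝ := fun i => x (Fin.ofNat (n + 1) i) with hf
  set d : ℕ → ℝ := fun i => if hi : i < n then z ⟨i, hi⟩ else 0 with hd
  have key : ∀ k, k < n → dist (f k) (f (k + 1)) ≤ d k := by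
    intro k hk
    have := h ⟨k, hk⟩
    simp only [hd, hk, dif_pos, Real.dist_eq]
    convert this using 4
    · ext; simp [Nat.mod_eq_of_lt (show k < n + 1 by omega)]
    · ext; simp [Nat.mod_eq_of_lt (show k + 1 < n + 1 by omega)]
  have hsum : ∑ i, z i = ∑ i ∈ Finset.Ico 0 n, d i := by
    rw [← Finset.range_eq_Ico, Finset.sum_range]
    refine Finset.sum_congr rfl fun i _ => ?_
    simp [hd]
  have f0 : f 0 = x 0 := by simp [hf]
  have fn : f n = x (Fin.last n) := by
    simp only [hf]; congr 1; ext; simp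
  have hdist := fun (a b : ℕ) (hab : a ≤ b) (hb : b ≤ n) =>
    dist_le_Ico_sum_of_dist_le (f := f) hab (d := d) (fun {k} h1 h2 => key k (by omega))
  refine ⟨?_, ?_⟩
  · rw [hsum, ← f0, ← fn, ← Real.dist_eq]
    exact hdist 0 n (by omega) le_rfl
  · intro i
    have h1 := hdist 0 i (by omega) (by omega)
    have h2 := hdist (i + 1) n (by omega) le_rfl
    have fi : f i = x i.castSucc := by
      simp only [hf]; congr 1; ext; simp
    have fi1 : f (i + 1) = x i.succ := by
      simp only [hf]; congr 1; ext; simp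
    have di : d i = z i := by simp [hd]
    rw [hsum, ← Finset.sum_Ico_consecutive d (Nat.zero_le (i : ℕ)) (by omega : (i : ℕ) ≤ n),
      Finset.sum_eq_sum_Ico_succ_bot (by omega : (i : ℕ) < n), di]
    rw [Real.dist_eq, f0, fi] at h1
    rw [Real.dist_eq, fi1, fn] at h2
    linarith

lemma bqV0_eq (n : ℕ) : bqV (fun _ : Fin (n + 1) => false) = bqTh n ⁻¹' bqS (n + 1) := by
  have hZ : ∀ p (i : Fin (n + 1)), bqZs (fun _ => false) p i = bqZ p i := by
    intro p i; simp [bqZs]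
  have ha : ∀ p (i : Fin n), (bqTh n p).1 i.castSucc = p.1 i.castSucc - p.2 i.castSucc := by
    intro p i
    simp [bqTh, bqA1, Fin.castSucc_ne_last]
  have ha' : ∀ p, (bqTh n p).1 (Fin.last n) = p.2 (Fin.last n) := by
    intro p; simp [bqTh, bqA1]
  have hb : ∀ p (i : Fin n), (bqTh n p).2 i.castSucc = p.1 i.succ - p.2 i.castSucc := by
    intro p i
    simp only [bqTh, bqD, Pi.add_apply, bqM_apply]
    simp [bqA1, bqShift, Fin.castSucc_ne_last, Fin.coeSucc_eq_succ]
  have hb' : ∀ p, (bqTh n p).2 (Fin.last n) = 1 - p.1 (Fin.last n) - p.1 0 + p.2 (Fin.last n) := by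
    intro p
    simp only [bqTh, bqD, Pi.add_apply, bqM_apply]
    simp [bqA1, bqShift]
    ring
  ext ⟨x, y⟩
  simp only [bqV, bqS, Set.mem_ofPred_eq, Set.mem_preimage, hZ]
  have hsum : ∑ i, (bqTh n (x, y)).1 i + ∑ i, (bqTh n (x, y)).2 i =
      ∑ i : Fin n, bqZ (x, y) i.castSucc + (1 - bqZ (x, y) (Fin.last n)) := by
    rw [Fin.sum_univ_castSucc, Fin.sum_univ_castSucc]
    simp only [ha, ha', hb, hb', bqZ, Fin.coeSucc_eq_succ, Fin.last_add_one]
    have : ∑ i : Fin n, (x i.castSucc + x i.succ - 2 * y i.castSucc) =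
      ∑ i : Fin n, (x i.castSucc - y i.castSucc) + ∑ i : Fin n, (x i.succ - y i.castSucc) := by
      rw [← Finset.sum_add_distrib]
      refine Finset.sum_congr rfl fun i _ => ?_
      ring
    rw [this]; ring
  rw [hsum]
  constructor
  · rintro ⟨hQ, hlt⟩
    refine ⟨fun i => ?_, fun i => ?_, by linarith⟩
    · induction i using Fin.lastCases with
      | last => rw [ha']; exact (hQ _).1
      | cast i => rw [ha]; have := (hQ i.castSucc).2.1; simp only at this ⊢; linarith
    · induction i using Fin.lastCases with
      | last => rw [hb']; have := (hQ (Fin.last n)).2.2.2; simp only [Fin.last_add_one] at this ⊢; linarith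
      | cast i => rw [hb]; have := (hQ i.castSucc).2.2.1; simp only [Fin.coeSucc_eq_succ] at this ⊢; linarith
  · rintro ⟨h1, h2, h3⟩
    have a1 := fun i : Fin n => h1 i.castSucc
    have a2 := h1 (Fin.last n)
    have b1 := fun i : Fin n => h2 i.castSucc
    have b2 := h2 (Fin.last n)
    simp only [ha, ha', hb, hb'] at a1 a2 b1 b2
    obtain ⟨d1, d2⟩ := bq_path_dist n x (fun i => bqZ (x, y) i.castSucc) (by
      intro i
      have := a1 i
      have := b1 i
      simp only [bqZ, Fin.coeSucc_eq_succ, abs_le]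
      constructor <;> linarith)
    have hl : bqZ (x, y) (Fin.last n) = x (Fin.last n) + x 0 - 2 * y (Fin.last n) := by
      simp [bqZ]
    rw [abs_le] at d1
    refine ⟨fun i => ?_, by linarith⟩
    induction i using Fin.lastCases with
    | last =>
      simp only [Fin.last_add_one]
      refine ⟨by linarith, by linarith, by linarith, by linarith⟩
    | cast i =>
      have e1 := a1 i
      have e2 := b1 i
      have e3 := d2 i
      have e4 := neg_abs_le (x 0 - x i.castSucc)
      have e5 := le_abs_self (x 0 - x i.castSucc)
      have e6 := neg_abs_le (x i.succ - x (Fin.last n))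
      have e7 := le_abs_self (x i.succ - x (Fin.last n))
      have hi : bqZ (x, y) i.castSucc = x i.castSucc + x i.succ - 2 * y i.castSucc := by
        simp [bqZ]
      simp only [Fin.coeSucc_eq_succ]
      refine ⟨by linarith, by linarith, by linarith, by linarith⟩

lemma bqV0_vol (n : ℕ) : volume (bqV (fun _ : Fin (n + 1) => false)) =
    ENNReal.ofReal (1 / 2) * ENNReal.ofReal (1 / (Nat.factorial (2 * (n + 1)) : ℝ)) := by
  rw [bqV0_eq, (bqTh_mp n).measure_preimage (bqS_meas _).nullMeasurableSet, Measure.prod_smul_right,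
    Measure.smul_apply, smul_eq_mul, ← bqS_vol]
  rfl

def bqSwX (b : Bool) (x : ℝ) : ℝ := if b then 1 - x else x

def bqSwY (b c : Bool) (x x' y : ℝ) : ℝ :=
  match b, c with
  | false, false => y
  | true, false => x' - y
  | false, true => x - y
  | true, true => (1 - x - x') + y

def bqSw {n : ℕ} (s : Fin (n + 1) → Bool) (p : (Fin (n + 1) → ℝ) × (Fin (n + 1) → ℝ)) :
    (Fin (n + 1) → ℝ) × (Fin (n + 1) → ℝ) :=
  (fun i => bqSwX (s i) (p.1 i), fun i => bqSwY (s i) (s (i + 1)) (p.1 i) (p.1 (i + 1)) (p.2 i))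

lemma bqSw_mp {n : ℕ} (s : Fin (n + 1) → Bool) : MeasurePreserving (bqSw s) volume volume := by
  have hx : MeasurePreserving (fun (x : Fin (n + 1) → ℝ) (i : Fin (n + 1)) => bqSwX (s i) (x i))
      volume volume := by
    refine volume_preserving_pi (f := fun i => bqSwX (s i)) fun i => ?_
    unfold bqSwX
    split_ifs
    · exact Measure.measurePreserving_sub_left volume 1
    · exact MeasurePreserving.id _
  refine MeasurePreserving.skew_product hx
    (g := fun (x y : Fin (n + 1) → ℝ) (i : Fin (n + 1)) => bqSwY (s i) (s (i + 1)) (x i) (x (i + 1)) (y i)) ?_ ?_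
  · refine measurable_pi_lambda _ fun i => ?_
    simp only [Function.uncurry]
    cases s i <;> cases s (i + 1) <;> simp only [bqSwY] <;> fun_prop
  · refine Eventually.of_forall fun x => ?_
    refine (volume_preserving_pi
      (f := fun i => bqSwY (s i) (s (i + 1)) (x i) (x (i + 1))) fun i => ?_).map_eq
    cases s i <;> cases s (i + 1)
    · exact MeasurePreserving.id _
    · exact Measure.measurePreserving_sub_left volume _
    · exact Measure.measurePreserving_sub_left volume _
    · exact measurePreserving_add_left volume _

lemma bqV_eq {n : ℕ} (s : Fin (n + 1) → Bool) :
    bqV s = bqSw s ⁻¹' bqV (fun _ : Fin (n + 1) => false) := by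
  have hZ : ∀ p i, bqZs (fun _ => false) (bqSw s p) i = bqZs s p i := by
    intro p i
    simp only [bqZs, if_true, bqZ, bqSw]
    cases s i <;> cases s (i + 1) <;> simp [bqSwX, bqSwY] <;> ring
  have hQ : ∀ p, bqSw s p ∈ bqQ n ↔ p ∈ bqQ n := by
    intro p
    refine forall_congr' fun i => ?_
    simp only [bqSw]
    cases s i <;> cases s (i + 1) <;> simp only [bqSwX, bqSwY, if_true, if_false, Bool.false_eq_true] <;>
      constructor <;> rintro ⟨h1, h2, h3, h4⟩ <;> refine ⟨?_, ?_, ?_, ?_⟩ <;> linarith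
  ext p
  simp only [bqV, Set.mem_ofPred_eq, Set.mem_preimage, hZ, hQ]

lemma bqV_vol {n : ℕ} (s : Fin (n + 1) → Bool) : volume (bqV s) =
    ENNReal.ofReal (1 / 2) * ENNReal.ofReal (1 / (Nat.factorial (2 * (n + 1)) : ℝ)) := by
  rw [bqV_eq, (bqSw_mp s).measure_preimage (bqV_meas _).nullMeasurableSet, bqV0_vol]

lemma bqV_compl {n : ℕ} (s : Fin (n + 1) → Bool) : bqV (fun i => !(s i)) = bqV s := by
  simp [bqV, bqZs]

/-- a bit string which is not constant on the cycle changes at least twice -/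
lemma bq_two_changes (n : ℕ) (t : Fin (n + 1) → Bool) (i : Fin (n + 1)) (h : t i ≠ t 0) :
    2 ≤ ∑ j, bqNe (t j) (t (j + 1)) := by
  rw [Fin.sum_univ_castSucc]
  simp only [Fin.last_add_one, Fin.coeSucc_eq_succ]
  set x : Fin (n + 1) → ℝ := fun i => bqB (t i) with hx
  have hne : ∀ a b, bqNe a b = |bqB a - bqB b| := by
    intro a b; cases a <;> cases b <;> simp [bqNe, bqB]
  have key : ∀ k : Fin (n + 1), |x 0 - x k| + |x k - x (Fin.last n)| ≤
      ∑ j : Fin n, bqNe (t j.castSucc) (t j.succ) := by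
    obtain ⟨d1, d2⟩ := bq_path_dist n x (fun j => bqNe (t j.castSucc) (t j.succ))
      (fun j => le_of_eq (hne _ _).symm)
    intro k
    induction k using Fin.lastCases with
    | last => simpa using d1
    | cast k =>
      have := d2 k
      rw [hne] at this
      have := abs_sub_le (x k.castSucc) (x k.succ) (x (Fin.last n))
      simp only [hx] at *
      linarith
  have hk := key i
  rw [hne]
  have h1 := abs_sub_le (x i) (x (Fin.last n)) (x 0)
  have h2 : |x 0 - x i| = 1 := by
    simp only [hx]
    rw [← hne, bqNe, if_neg (Ne.symm h)]
  rw [abs_sub_comm (x i) (x 0), h2] at h1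
  simp only [hx] at *
  linarith

lemma bqV_disj {n : ℕ} (s s' : Fin (n + 1) → Bool) (h0 : s 0 = s' 0) (hne : s ≠ s') :
    Disjoint (bqV s) (bqV s') := by
  rw [Set.disjoint_left]
  rintro p ⟨hQ, h1⟩ ⟨_, h2⟩
  obtain ⟨i, hi⟩ := Function.ne_iff.1 hne
  have ht := bq_two_changes n (fun j => xor (s j) (s' j)) i (by
    simp only [h0]
    revert hi
    cases s i <;> cases s' i <;> simp)
  have hz := fun i => bq_z_nonneg hQ i
  have hb : ∀ j, bqNe (xor (s j) (s' j)) (xor (s (j + 1)) (s' (j + 1))) ≤ bqZs s p j + bqZs s' p j := by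
    intro j
    have := hz j
    simp only [bqZs, bqNe]
    cases s j <;> cases s' j <;> cases s (j + 1) <;> cases s' (j + 1) <;> simp <;> linarith
  have hb' : ∀ j, bqNe (xor (s j) (s' j)) (xor (s (j + 1)) (s' (j + 1))) ≤
      (1 - bqZs s p j) + (1 - bqZs s' p j) := by
    intro j
    have := hz j
    simp only [bqZs, bqNe]
    cases s j <;> cases s' j <;> cases s (j + 1) <;> cases s' (j + 1) <;> simp <;> linarith
  rw [Fin.sum_univ_castSucc] at ht
  have e1 := Finset.sum_le_sum (fun (j : Fin n) (_ : j ∈ Finset.univ) => hb j.castSucc)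
  rw [Finset.sum_add_distrib] at e1
  have e2 := hb' (Fin.last n)
  linarith

lemma bqV_total (n : ℕ) : volume (bqP n) = volume (bqQ n) -
    (2 : ENNReal) ^ n * (ENNReal.ofReal (1 / 2) *
      ENNReal.ofReal (1 / (Nat.factorial (2 * (n + 1)) : ℝ))) := by
  let c : (Fin n → Bool) → (Fin (n + 1) → Bool) := fun s => Fin.cons false s
  have hP : bqP n = bqQ n \ ⋃ s, bqV (c s) := by
    ext p
    simp only [bqP, Set.mem_ofPred_eq, Set.mem_sdiff, Set.mem_iUnion, not_exists]
    refine and_congr_right fun hp => ?_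
    constructor
    · rintro h s ⟨_, hs⟩
      exact absurd hs (not_lt.2 (h _))
    · intro h s
      by_contra hcon
      have hs : p ∈ bqV s := ⟨hp, not_le.1 hcon⟩
      have : ∃ s', bqV (c s') = bqV s := by
        have hc : ∀ t : Fin (n + 1) → Bool, t 0 = false → c (Fin.tail t) = t := by
          intro t ht
          simp only [c]
          rw [← ht, Fin.cons_self_tail]
        cases h0 : s 0
        · exact ⟨Fin.tail s, by rw [hc s h0]⟩
        · exact ⟨Fin.tail (fun i => !(s i)), by rw [hc _ (by simp [h0]), bqV_compl]⟩
      obtain ⟨s', hs'⟩ := this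
      exact h s' (hs' ▸ hs)
  have hdisj : Pairwise (Function.onFun Disjoint (fun s => bqV (c s))) := by
    intro s s' h
    refine bqV_disj _ _ (by simp [c]) ?_
    intro hc
    exact h (Fin.cons_injective2 hc).2
  have hU : volume (⋃ s, bqV (c s)) = (2 : ENNReal) ^ n * (ENNReal.ofReal (1 / 2) *
      ENNReal.ofReal (1 / (Nat.factorial (2 * (n + 1)) : ℝ))) := by
    rw [measure_iUnion hdisj (fun s => bqV_meas _), tsum_fintype]
    simp only [bqV_vol]
    simp
  rw [hP, measure_sdiff (Set.iUnion_subset fun s p hp => hp.1)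
    (MeasurableSet.iUnion fun s => bqV_meas _).nullMeasurableSet, hU]
  rw [hU]
  exact (ENNReal.mul_lt_top (by simp) (ENNReal.mul_lt_top (by simp) (by simp))).ne

/-! ### Part C: volume of the relaxation -/

def bqTent (x : ℝ) : ℝ := 2 * min x (1 - x)

lemma bqTent_cont : Continuous bqTent := by unfold bqTent; fun_prop

lemma bqTent_mp : MeasurePreserving bqTent (volume.restrict (Set.Icc (0:ℝ) 1))
    (volume.restrict (Set.Icc (0:ℝ) 1)) := by
  refine ⟨bqTent_cont.measurable, ?_⟩
  have : IsFiniteMeasure (volume.restrict (Set.Icc (0:ℝ) 1)) := inferInstance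
  have : IsFiniteMeasure (Measure.map bqTent (volume.restrict (Set.Icc (0:ℝ) 1))) := inferInstance
  refine Measure.ext_of_Ici _ _ fun a => ?_
  rw [Measure.map_apply bqTent_cont.measurable measurableSet_Ici,
    Measure.restrict_apply (bqTent_cont.measurable measurableSet_Ici),
    Measure.restrict_apply measurableSet_Ici]
  rcases le_or_gt 0 a with ha | ha
  · have e1 : bqTent ⁻¹' Set.Ici a ∩ Set.Icc 0 1 = Set.Icc (a / 2) (1 - a / 2) := by
      ext x
      simp only [Set.mem_inter_iff, Set.mem_preimage, Set.mem_Ici, Set.mem_Icc, bqTent]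
      constructor
      · rintro ⟨h, _⟩
        have h1 := min_le_left x (1 - x)
        have h2 := min_le_right x (1 - x)
        constructor <;> linarith
      · rintro ⟨h1, h2⟩
        have : a / 2 ≤ min x (1 - x) := le_min h1 (by linarith)
        exact ⟨by linarith, by linarith, by linarith⟩
    have e2 : Set.Ici a ∩ Set.Icc 0 1 = Set.Icc a 1 := by
      ext x
      simp only [Set.mem_inter_iff, Set.mem_Ici, Set.mem_Icc]
      constructor
      · rintro ⟨h, _, h2⟩; exact ⟨h, h2⟩
      · rintro ⟨h, h2⟩; exact ⟨h, by linarith, h2⟩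
    rw [e1, e2, Real.volume_Icc, Real.volume_Icc]
    congr 1; ring
  · congr 1
    ext x
    simp only [Set.mem_inter_iff, Set.mem_preimage, Set.mem_Ici, Set.mem_Icc, bqTent]
    constructor
    · rintro ⟨_, h1, h2⟩; exact ⟨by linarith, h1, h2⟩
    · rintro ⟨_, h1, h2⟩
      have : 0 ≤ min x (1 - x) := le_min h1 (by linarith)
      exact ⟨by linarith, h1, h2⟩

def bqR (n : ℕ) : Set ((Fin (n + 1) → ℝ) × (Fin (n + 1) → ℝ)) :=
  {p | ∀ i, 0 ≤ p.2 i ∧ p.2 i ≤ p.1 i ∧ p.2 i ≤ p.1 (i + 1) ∧ p.1 i ≤ 1}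

lemma bqR_meas (n : ℕ) : MeasurableSet (bqR n) := by
  have e : bqR n = ⋂ i, ({p | 0 ≤ p.2 i} ∩ ({p | p.2 i ≤ p.1 i} ∩ ({p | p.2 i ≤ p.1 (i + 1)} ∩
      {p | p.1 i ≤ 1}))) := by
    ext q; simp [bqR]
  rw [e]
  refine MeasurableSet.iInter fun i => ?_
  refine (measurableSet_le (by fun_prop) (by fun_prop)).inter
    ((measurableSet_le (by fun_prop) (by fun_prop)).inter
    ((measurableSet_le (by fun_prop) (by fun_prop)).inter
    (measurableSet_le (by fun_prop) (by fun_prop))))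

def bqF {n : ℕ} (u : Fin (n + 1) → ℝ) : ENNReal := ∏ i, ENNReal.ofReal (min (u i) (u (i + 1)))

lemma bqF_meas (n : ℕ) : Measurable (bqF (n := n)) := by
  unfold bqF
  fun_prop

lemma bqR_vol (n : ℕ) : volume (bqR n) =
    ∫⁻ u in Set.univ.pi (fun _ : Fin (n + 1) => Set.Icc (0:ℝ) 1), bqF u := by
  rw [Measure.volume_eq_prod, Measure.prod_apply (bqR_meas n),
    ← lintegral_indicator (MeasurableSet.univ_pi fun _ => measurableSet_Icc)]
  refine lintegral_congr fun u => ?_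
  by_cases hu : u ∈ Set.univ.pi (fun _ : Fin (n + 1) => Set.Icc (0:ℝ) 1)
  · rw [Set.indicator_of_mem hu]
    have : Prod.mk u ⁻¹' bqR n = Set.univ.pi fun i => Set.Icc 0 (min (u i) (u (i + 1))) := by
      ext v
      simp only [bqR, Set.mem_preimage, Set.mem_ofPred_eq, Set.mem_univ_pi, Set.mem_Icc, le_min_iff]
      refine forall_congr' fun i => ?_
      have := (hu i trivial).2
      tauto
    rw [this, volume_pi_pi]
    simp [bqF]
  · rw [Set.indicator_of_notMem hu]
    convert measure_empty (μ := (volume : Measure (Fin (n + 1) → ℝ)))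
    ext v
    simp only [bqR, Set.mem_preimage, Set.mem_ofPred_eq, Set.mem_empty_iff_false, iff_false]
    intro h
    refine hu fun i _ => ?_
    obtain ⟨h1, h2, h3, h4⟩ := h i
    exact ⟨by linarith, h4⟩

lemma bqQ_vol (n : ℕ) : volume (bqQ n) = ENNReal.ofReal ((1 / 2) ^ (n + 1)) * volume (bqR n) := by
  have hmp : MeasurePreserving (fun (x : Fin (n + 1) → ℝ) i => bqTent (x i))
      (volume.restrict (Set.univ.pi (fun _ : Fin (n + 1) => Set.Icc (0:ℝ) 1)))
      (volume.restrict (Set.univ.pi (fun _ : Fin (n + 1) => Set.Icc (0:ℝ) 1))) := by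
    rw [volume_pi, Measure.restrict_pi_pi]
    exact measurePreserving_pi _ _ (fun _ => bqTent_mp)
  rw [bqR_vol, ← hmp.lintegral_comp (bqF_meas n), ← lintegral_const_mul' _ _ (by simp)]
  rw [Measure.volume_eq_prod, Measure.prod_apply (bqQ_meas n),
    ← lintegral_indicator (MeasurableSet.univ_pi fun _ => measurableSet_Icc)]
  refine lintegral_congr fun x => ?_
  by_cases hx : x ∈ Set.univ.pi (fun _ : Fin (n + 1) => Set.Icc (0:ℝ) 1)
  · rw [Set.indicator_of_mem hx]
    have : Prod.mk x ⁻¹' bqQ n = Set.univ.pi fun i =>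
        Set.Icc (max 0 (x i + x (i + 1) - 1)) (min (x i) (x (i + 1))) := by
      ext v
      simp only [bqQ, Set.mem_preimage, Set.mem_ofPred_eq, Set.mem_univ_pi, Set.mem_Icc, le_min_iff,
        max_le_iff]
      refine forall_congr' fun i => ?_
      tauto
    rw [this, volume_pi_pi]
    have hconst : ENNReal.ofReal ((1 / 2) ^ (n + 1)) = ∏ _i : Fin (n + 1), ENNReal.ofReal (1 / 2) := by
      rw [Finset.prod_const, Finset.card_univ, Fintype.card_fin, ENNReal.ofReal_pow (by norm_num)]
    rw [bqF, hconst, ← Finset.prod_mul_distrib]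
    refine Finset.prod_congr rfl fun i _ => ?_
    rw [Real.volume_Icc, ← ENNReal.ofReal_mul (by norm_num)]
    congr 1
    simp only [bqTent]
    rcases le_total (x i) (x (i + 1)) with h1 | h1 <;>
    rcases le_total (x i + x (i + 1)) 1 with h2 | h2 <;>
    rcases le_total (x i) (1 - x i) with h3 | h3 <;>
    rcases le_total (x (i + 1)) (1 - x (i + 1)) with h4 | h4 <;>
    simp only [min_eq_left h1, min_eq_right h1, min_eq_left h3, min_eq_right h3, min_eq_left h4,
      min_eq_right h4] <;>
    first
    | rw [max_eq_left (by linarith), min_eq_left (by linarith)]; linarith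
    | rw [max_eq_left (by linarith), min_eq_right (by linarith)]; linarith
    | rw [max_eq_right (by linarith), min_eq_left (by linarith)]; linarith
    | rw [max_eq_right (by linarith), min_eq_right (by linarith)]; linarith
  · rw [Set.indicator_of_notMem hx]
    convert measure_empty (μ := (volume : Measure (Fin (n + 1) → ℝ)))
    ext v
    simp only [Set.mem_preimage, Set.mem_empty_iff_false, iff_false]
    intro h
    exact hx fun i _ => bq_x_bounds h i

/-! rotation -/

def bqR0 (n : ℕ) : Set ((Fin (n + 1) → ℝ) × (Fin (n + 1) → ℝ)) :=
  {p | p ∈ bqR n ∧ ∀ j, p.1 j ≤ p.1 0}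

lemma bqR0_meas (n : ℕ) : MeasurableSet (bqR0 n) := by
  have e : bqR0 n = bqR n ∩ ⋂ j, {p | p.1 j ≤ p.1 0} := by
    ext q; simp [bqR0]
  rw [e]
  exact (bqR_meas n).inter (MeasurableSet.iInter fun i => measurableSet_le (by fun_prop) (by fun_prop))

lemma bq_null {ι : Type} [Fintype ι] (i j : ι) (h : i ≠ j) :
    volume {x : ι → ℝ | x i = x j} = 0 := by
  classical
  let S : Submodule ℝ (ι → ℝ) := LinearMap.ker
    ((LinearMap.proj i : (ι → ℝ) →ₗ[ℝ] ℝ) - (LinearMap.proj j : (ι → ℝ) →ₗ[ℝ] ℝ))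
  have hS : (S : Set (ι → ℝ)) = {x : ι → ℝ | x i = x j} := by
    ext x
    simp [S, sub_eq_zero]
  rw [← hS]
  apply Measure.addHaar_submodule
  intro htop
  have : (Pi.single i 1 : ι → ℝ) ∈ S := by rw [htop]; trivial
  simp [S, h] at this

def bqRot {n : ℕ} (k : Fin (n + 1)) (p : (Fin (n + 1) → ℝ) × (Fin (n + 1) → ℝ)) :
    (Fin (n + 1) → ℝ) × (Fin (n + 1) → ℝ) :=
  (fun i => p.1 (i + k), fun i => p.2 (i + k))

lemma bq_reindex {ι κ : Type} [Fintype ι] [Fintype κ] (e : ι ≃ κ) :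
    MeasurePreserving (fun (x : κ → ℝ) (i : ι) => x (e i)) volume volume :=
  (volume_measurePreserving_piCongrLeft (fun _ => ℝ) e).symm

lemma bqRot_mp {n : ℕ} (k : Fin (n + 1)) : MeasurePreserving (bqRot k) volume volume :=
  MeasurePreserving.prod (bq_reindex (Equiv.addRight k)) (bq_reindex (Equiv.addRight k))

lemma bqR_rot (n : ℕ) : volume (bqR n) = (n + 1 : ℕ) * volume (bqR0 n) := by
  have hmem : ∀ k p, p ∈ bqRot k ⁻¹' bqR0 n ↔ p ∈ bqR n ∧ ∀ j, p.1 j ≤ p.1 k := by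
    intro k p
    simp only [bqR0, bqR, Set.mem_preimage, Set.mem_ofPred_eq, bqRot, zero_add]
    refine and_congr ?_ ?_
    · constructor
      · intro h i
        have := h (i - k)
        simpa [add_right_comm] using this
      · intro h i
        have := h (i + k)
        simpa [add_right_comm] using this
    · constructor
      · intro h j
        simpa using h (j - k)
      · intro h j
        exact h _
  have hU : bqR n = ⋃ k, bqRot k ⁻¹' bqR0 n := by
    ext p
    simp only [Set.mem_iUnion, hmem]
    constructor
    · intro h
      obtain ⟨k, hk⟩ := Finite.exists_max p.1
      exact ⟨k, h, hk⟩
    · rintro ⟨k, h, _⟩; exact h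
  rw [hU, measure_iUnion₀, tsum_fintype]
  · simp only [fun k => (bqRot_mp (n := n) k).measure_preimage (bqR0_meas n).nullMeasurableSet]
    simp
  · intro k l hkl
    have h0 : volume ((Prod.fst : (Fin (n + 1) → ℝ) × (Fin (n + 1) → ℝ) → _) ⁻¹' {x | x k = x l}) = 0 :=
      Measure.quasiMeasurePreserving_fst.preimage_null (bq_null k l hkl)
    refine measure_mono_null ?_ h0
    rintro p ⟨h1, h2⟩
    exact le_antisymm (((hmem l p).1 h2).2 k) (((hmem k p).1 h1).2 l)
  · intro k
    exact ((bqRot_mp k).measurable (bqR0_meas n)).nullMeasurableSet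

/-! ### Zigzag polytope and alternating permutations -/

def bqAlt (N : ℕ) (σ : Equiv.Perm (Fin N)) : Prop :=
  ∀ (i : ℕ) (h : i + 1 < N),
      (Even i → σ ⟨i + 1, h⟩ < σ ⟨i, Nat.lt_of_succ_lt h⟩) ∧
      (Odd i → σ ⟨i, Nat.lt_of_succ_lt h⟩ < σ ⟨i + 1, h⟩)

def bqZig (N : ℕ) (w : Fin N → ℝ) : Prop :=
  ∀ (i : ℕ) (h : i + 1 < N),
      (Even i → w ⟨i, Nat.lt_of_succ_lt h⟩ ≤ w ⟨i + 1, h⟩) ∧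
      (Odd i → w ⟨i + 1, h⟩ ≤ w ⟨i, Nat.lt_of_succ_lt h⟩)

def bqCube (N : ℕ) : Set (Fin N → ℝ) := Set.univ.pi fun _ => Set.Icc 0 1

def bqZZ (N : ℕ) : Set (Fin N → ℝ) := {w | w ∈ bqCube N ∧ bqZig N w}

def bqSim (N : ℕ) (σ : Equiv.Perm (Fin N)) : Set (Fin N → ℝ) :=
  {w | w ∈ bqCube N ∧ ∀ i j, σ i < σ j → w j < w i}

lemma bqZig_meas (N : ℕ) : MeasurableSet {w : Fin N → ℝ | bqZig N w} := by
  have e : {w : Fin N → ℝ | bqZig N w} = ⋂ (i : ℕ), ⋂ (h : i + 1 < N),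
      ((⋂ (_ : Even i), {w | w ⟨i, Nat.lt_of_succ_lt h⟩ ≤ w ⟨i + 1, h⟩}) ∩
      (⋂ (_ : Odd i), {w | w ⟨i + 1, h⟩ ≤ w ⟨i, Nat.lt_of_succ_lt h⟩})) := by
    ext w; simp [bqZig]
  rw [e]
  refine MeasurableSet.iInter fun i => MeasurableSet.iInter fun h => ?_
  exact (MeasurableSet.iInter fun _ => measurableSet_le (by fun_prop) (by fun_prop)).inter
    (MeasurableSet.iInter fun _ => measurableSet_le (by fun_prop) (by fun_prop))

lemma bqCube_meas (N : ℕ) : MeasurableSet (bqCube N) :=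
  MeasurableSet.univ_pi fun _ => measurableSet_Icc

lemma bqZZ_meas (N : ℕ) : MeasurableSet (bqZZ N) := (bqCube_meas N).inter (bqZig_meas N)

lemma bqSim_meas (N : ℕ) (σ) : MeasurableSet (bqSim N σ) := by
  have e : bqSim N σ = bqCube N ∩ ⋂ i, ⋂ j, ⋂ (_ : σ i < σ j), {w | w j < w i} := by
    ext w; simp [bqSim]
  rw [e]
  exact (bqCube_meas N).inter (MeasurableSet.iInter fun i => MeasurableSet.iInter fun j =>
    MeasurableSet.iInter fun _ => measurableSet_lt (by fun_prop) (by fun_prop))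

lemma bqSim_iff {N : ℕ} {σ : Equiv.Perm (Fin N)} {w} (h : w ∈ bqSim N σ) (i j) :
    σ i < σ j ↔ w j < w i := by
  refine ⟨h.2 i j, fun hw => ?_⟩
  by_contra hcon
  rcases (not_lt.1 hcon).lt_or_eq with h' | h'
  · exact absurd (h.2 j i h') (not_lt.2 hw.le)
  · rw [σ.injective h'] at hw
    exact lt_irrefl _ hw

lemma bqSim_disj (N : ℕ) : Pairwise (Function.onFun Disjoint (bqSim N)) := by
  intro σ τ hne
  rw [Function.onFun, Set.disjoint_left]
  intro w h1 h2
  apply hne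
  have hlt : ∀ i j, σ i < σ j ↔ τ i < τ j := fun i j => by rw [bqSim_iff h1, bqSim_iff h2]
  let f : Fin N ≃o Fin N :=
    { toEquiv := σ.symm.trans τ
      map_rel_iff' := by
        intro a b
        simp only [Equiv.trans_apply]
        rw [← not_lt, ← not_lt, ← hlt]
        simp }
  have : f = OrderIso.refl _ := Subsingleton.elim _ _
  ext i
  have h3 : f (σ i) = σ i := by rw [this]; rfl
  have h4 : f (σ i) = τ i := by simp [f]
  rw [← h3, h4]

lemma bqSim_cover (N : ℕ) (w : Fin N → ℝ) (hw : w ∈ bqCube N) (hinj : Function.Injective w) :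
    ∃ σ, w ∈ bqSim N σ := by
  refine ⟨(Tuple.sort (fun i => - w i)).symm, hw, fun i j h => ?_⟩
  have hm := Tuple.monotone_sort (fun i => - w i)
  have := hm h.le
  simp only [Function.comp_apply, Equiv.apply_symm_apply, neg_le_neg_iff] at this
  refine lt_of_le_of_ne this fun h' => ?_
  rw [hinj h'] at h
  exact lt_irrefl _ h

lemma bq_ae_inj (N : ℕ) : ∀ᵐ w : Fin N → ℝ, Function.Injective w := by
  have : ∀ᵐ w : Fin N → ℝ, ∀ i j : Fin N, i ≠ j → w i ≠ w j := by
    rw [ae_all_iff]; intro i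
    rw [ae_all_iff]; intro j
    by_cases h : i = j
    · simp [h]
    · have := bq_null i j h
      rw [ae_iff]
      simpa [h] using this
  filter_upwards [this] with w hw i j h
  by_contra hne
  exact hw i j hne h

lemma bqSim_vol_eq (N : ℕ) (σ) : volume (bqSim N σ) = volume (bqSim N 1) := by
  rw [← (bq_reindex σ.symm).measure_preimage (bqSim_meas N 1).nullMeasurableSet]
  congr 1
  ext w
  simp only [bqSim, bqCube, Set.mem_preimage, Set.mem_ofPred_eq, Set.mem_univ_pi, Equiv.Perm.coe_one, id]
  refine and_congr ?_ ?_
  · exact ⟨fun h i => h _, fun h i => by simpa using h (σ i)⟩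
  · constructor
    · intro h i j hij
      exact h _ _ (by simpa using hij)
    · intro h i j hij
      simpa using h _ _ hij

lemma bq_decomp (N : ℕ) (S : Set (Fin N → ℝ)) (hS : MeasurableSet S) (hc : S ⊆ bqCube N) :
    volume S = ∑ σ, volume (S ∩ bqSim N σ) := by
  rw [← tsum_fintype (L := .unconditional _), ← measure_iUnion]
  · apply measure_congr
    filter_upwards [bq_ae_inj N] with w hw
    apply propext
    change w ∈ S ↔ w ∈ ⋃ σ, S ∩ bqSim N σ
    rw [← Set.inter_iUnion]
    constructor
    · intro h
      exact ⟨h, Set.mem_iUnion.2 (bqSim_cover N w (hc h) hw)⟩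
    · exact fun h => h.1
  · intro σ τ h
    exact (bqSim_disj N h).mono Set.inter_subset_right Set.inter_subset_right
  · exact fun σ => hS.inter (bqSim_meas N σ)

lemma bqSim_vol (N : ℕ) (σ) : volume (bqSim N σ) = (Nat.factorial N : ENNReal)⁻¹ := by
  have h := bq_decomp N (bqCube N) (bqCube_meas N) subset_rfl
  have h1 : volume (bqCube N) = 1 := by
    rw [bqCube, volume_pi_pi]; simp
  have h2 : ∀ σ, bqCube N ∩ bqSim N σ = bqSim N σ := fun σ =>
    Set.inter_eq_right.2 fun w hw => hw.1
  simp only [h1, h2, bqSim_vol_eq N] at h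
  rw [bqSim_vol_eq]
  simp [Fintype.card_perm] at h
  rw [mul_comm] at h
  exact ENNReal.eq_inv_of_mul_eq_one_left h.symm

lemma bqZZ_vol (N : ℕ) : volume (bqZZ N) = (eulerNumber N : ENNReal) * (Nat.factorial N : ENNReal)⁻¹ := by
  classical
  rw [bq_decomp N (bqZZ N) (bqZZ_meas N) (fun w hw => hw.1)]
  have hcard : eulerNumber N = (Finset.univ.filter (fun σ => bqAlt N σ)).card := by
    unfold eulerNumber
    rw [Nat.card_eq_fintype_card, Fintype.card_subtype]
    rfl
  have : ∀ σ, volume (bqZZ N ∩ bqSim N σ) = if bqAlt N σ then (Nat.factorial N : ENNReal)⁻¹ else 0 := by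
    intro σ
    have key : ∀ w ∈ bqSim N σ, (w ∈ bqZZ N ↔ bqAlt N σ) := by
      intro w hw
      have hle : ∀ i j, i ≠ j → (w i ≤ w j ↔ σ j < σ i) := by
        intro i j hij
        rw [bqSim_iff hw]
        refine ⟨fun h => lt_of_le_of_ne h fun h' => ?_, le_of_lt⟩
        rcases lt_or_gt_of_ne (σ.injective.ne hij) with h2 | h2
        · exact absurd h' (ne_of_gt (hw.2 _ _ h2))
        · exact absurd h' (ne_of_lt (hw.2 _ _ h2))
      constructor
      · rintro ⟨_, hz⟩ i h
        obtain ⟨h1, h2⟩ := hz i h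
        rw [hle _ _ (by simp)] at h1 h2
        exact ⟨h1, h2⟩
      · intro ha
        refine ⟨hw.1, fun i h => ?_⟩
        obtain ⟨h1, h2⟩ := ha i h
        rw [hle _ _ (by simp), hle _ _ (by simp)]
        exact ⟨h1, h2⟩
    split_ifs with h
    · rw [Set.inter_eq_right.2 fun w hw => (key w hw).2 h, bqSim_vol]
    · convert measure_empty (μ := (volume : Measure (Fin N → ℝ)))
      ext w
      simp only [Set.mem_inter_iff, Set.mem_empty_iff_false, iff_false]
      rintro ⟨h1, h2⟩
      exact h ((key w h2).1 h1)
  simp only [this]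
  rw [← Finset.sum_filter, Finset.sum_const, hcard, nsmul_eq_mul]

/-! the cone over the zigzag polytope -/

def bqT (N : ℕ) : Set (ℝ × (Fin N → ℝ)) :=
  {q | q.1 ≤ 1 ∧ (∀ k, 0 ≤ q.2 k ∧ q.2 k ≤ q.1) ∧ bqZig N q.2}

lemma bqT_meas (N : ℕ) : MeasurableSet (bqT N) := by
  have e : bqT N = {q | q.1 ≤ 1} ∩ ((⋂ k, ({q | 0 ≤ q.2 k} ∩ {q | q.2 k ≤ q.1})) ∩
      Prod.snd ⁻¹' {w | bqZig N w}) := by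
    ext q; simp [bqT]
  rw [e]
  exact (measurableSet_le (by fun_prop) (by fun_prop)).inter ((MeasurableSet.iInter fun k =>
    (measurableSet_le (by fun_prop) (by fun_prop)).inter (measurableSet_le (by fun_prop) (by fun_prop))).inter
    (measurable_snd (bqZig_meas N)))

lemma bqT_vol (N : ℕ) (hN : 0 < N) :
    volume (bqT N) = ENNReal.ofReal (1 / (N + 1 : ℝ)) * volume (bqZZ N) := by
  rw [Measure.volume_eq_prod, Measure.prod_apply (bqT_meas N)]
  have hfib : ∀ᵐ t : ℝ, volume (Prod.mk t ⁻¹' bqT N) =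
      (Set.Ioc 0 1).indicator (fun t => ENNReal.ofReal (t ^ N) * volume (bqZZ N)) t := by
    have h0 : ∀ᵐ t : ℝ, t ≠ 0 := by
      rw [ae_iff]; simp
    filter_upwards [h0] with t ht
    by_cases hm : t ∈ Set.Ioc (0:ℝ) 1
    · rw [Set.indicator_of_mem hm]
      have hpos : 0 < t := hm.1
      have e : Prod.mk t ⁻¹' bqT N = (fun w => t⁻¹ • w) ⁻¹' bqZZ N := by
        ext w
        simp only [bqT, bqZZ, bqCube, bqZig, Set.mem_preimage, Set.mem_ofPred_eq, Set.mem_univ_pi,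
          Set.mem_Icc, Pi.smul_apply, smul_eq_mul, hm.2, true_and]
        refine and_congr (forall_congr' fun k => ?_) (forall_congr' fun i => forall_congr' fun h => ?_)
        · rw [inv_mul_le_iff₀ hpos, mul_one, mul_nonneg_iff_of_pos_left (inv_pos.2 hpos)]
        · rw [mul_le_mul_iff_right₀ (inv_pos.2 hpos), mul_le_mul_iff_right₀ (inv_pos.2 hpos)]
      rw [e, Measure.addHaar_preimage_smul _ (inv_ne_zero ht)]
      simp [abs_of_pos hpos]
    · rw [Set.indicator_of_notMem hm]
      convert measure_empty (μ := (volume : Measure (Fin N → ℝ)))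
      ext w
      simp only [Set.mem_preimage, Set.mem_empty_iff_false, iff_false]
      rintro ⟨h1, h2, _⟩
      have := h2 ⟨0, hN⟩
      simp only at h1 this
      exact hm ⟨lt_of_le_of_ne (by linarith) (Ne.symm ht), h1⟩
  rw [lintegral_congr_ae hfib, lintegral_indicator measurableSet_Ioc, lintegral_mul_const _ (by fun_prop)]
  congr 1
  rw [← ofReal_integral_eq_lintegral_ofReal]
  · rw [← intervalIntegral.integral_of_le zero_le_one, integral_pow]
    simp
  · apply Continuous.integrableOn_Ioc
    fun_prop
  · filter_upwards [ae_restrict_mem measurableSet_Ioc] with s hs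
    exact pow_nonneg hs.1.le _

/-! interleaving coordinates -/

def bqIdx (n : ℕ) : Fin (n + 1) ⊕ Fin (n + 1) ≃ Fin (2 * n + 1 + 1) where
  toFun s := Sum.elim (fun i : Fin (n + 1) => ⟨2 * (i : ℕ), by omega⟩)
    (fun i : Fin (n + 1) => ⟨2 * (i : ℕ) + 1, by omega⟩) s
  invFun j := if (j : ℕ) % 2 = 0 then Sum.inl ⟨(j : ℕ) / 2, by omega⟩ else Sum.inr ⟨(j : ℕ) / 2, by omega⟩
  left_inv := by
    rintro (i | i)
    · simp
    · have h : ¬ (2 * (i : ℕ) + 1) % 2 = 0 := by omega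
      refine (if_neg h).trans ?_
      congr 1
      ext
      change (2 * (i : ℕ) + 1) / 2 = i
      omega
  right_inv := by
    intro j
    simp only
    split_ifs with h
    · ext; simp; omega
    · ext; simp; omega

lemma bqR0_vol (n : ℕ) : volume (bqR0 n) = volume (bqT (2 * n + 1)) := by
  have h1 := volume_measurePreserving_sumPiEquivProdPi (fun _ : Fin (n + 1) ⊕ Fin (n + 1) => ℝ)
  have h2 := bq_reindex (bqIdx n)
  have h3 := volume_preserving_piFinSuccAbove (fun _ : Fin (2 * n + 1 + 1) => ℝ) 0
  rw [← (h1.comp h2).measure_preimage (bqR0_meas n).nullMeasurableSet,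
    ← h3.measure_preimage (bqT_meas _).nullMeasurableSet]
  congr 1
  ext W
  set W' : ℕ → ℝ := fun j => if h : j < 2 * n + 1 + 1 then W ⟨j, h⟩ else 0 with hW'
  have L : W ∈ (MeasurableEquiv.sumPiEquivProdPi (fun _ : Fin (n + 1) ⊕ Fin (n + 1) => ℝ) ∘
      fun x i => x ((bqIdx n) i)) ⁻¹' bqR0 n ↔
      ((∀ i, i < n + 1 → 0 ≤ W' (2 * i + 1) ∧ W' (2 * i + 1) ≤ W' (2 * i) ∧
        W' (2 * i + 1) ≤ (if i = n then W' 0 else W' (2 * i + 2)) ∧ W' (2 * i) ≤ 1) ∧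
        ∀ i, i < n + 1 → W' (2 * i) ≤ W' 0) := by
    have c1 : ∀ i : Fin (n + 1), ((MeasurableEquiv.sumPiEquivProdPi
        (fun _ : Fin (n + 1) ⊕ Fin (n + 1) => ℝ)) (fun i => W ((bqIdx n) i))).1 i = W' (2 * i) := by
      intro i
      simp only [hW']
      rw [dif_pos (by omega)]
      rfl
    have c2 : ∀ i : Fin (n + 1), ((MeasurableEquiv.sumPiEquivProdPi
        (fun _ : Fin (n + 1) ⊕ Fin (n + 1) => ℝ)) (fun i => W ((bqIdx n) i))).2 i = W' (2 * i + 1) := by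
      intro i
      simp only [hW']
      rw [dif_pos (by omega)]
      rfl
    have c3 : ∀ i : Fin (n + 1), W' (2 * ((i + 1 : Fin (n + 1)) : ℕ)) =
        if (i : ℕ) = n then W' 0 else W' (2 * i + 2) := by
      intro i
      induction i using Fin.lastCases with
      | last => simp
      | cast i =>
        rw [Fin.coeSucc_eq_succ]
        simp only [Fin.val_succ, Fin.val_castSucc]
        rw [if_neg (by omega)]
        rfl
    simp only [Set.mem_preimage, Function.comp_apply, bqR0, bqR, Set.mem_ofPred_eq, c1, c2, c3,
      Fin.val_zero, mul_zero]
    rw [Fin.forall_iff, Fin.forall_iff]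
  have Rr : W ∈ (MeasurableEquiv.piFinSuccAbove (fun _ : Fin (2 * n + 1 + 1) => ℝ) 0) ⁻¹' bqT (2 * n + 1) ↔
      (W' 0 ≤ 1 ∧ (∀ k, k < 2 * n + 1 → 0 ≤ W' (k + 1) ∧ W' (k + 1) ≤ W' 0) ∧
        ∀ i, i + 1 < 2 * n + 1 → (Even i → W' (i + 1) ≤ W' (i + 2)) ∧ (Odd i → W' (i + 2) ≤ W' (i + 1))) := by
    have c0 : W' 0 = W 0 := by simp [hW']
    have c1 : ∀ k (h : k < 2 * n + 1), W' (k + 1) = W (Fin.succ ⟨k, h⟩) := by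
      intro k h
      simp only [hW']
      rw [dif_pos (by omega)]
      rfl
    change (W 0 ≤ 1 ∧ (∀ k : Fin (2 * n + 1), 0 ≤ W k.succ ∧ W k.succ ≤ W 0) ∧
      bqZig (2 * n + 1) (fun k => W k.succ)) ↔ _
    rw [c0, Fin.forall_iff]
    refine and_congr_right fun _ => and_congr ?_ ?_
    · refine forall_congr' fun k => forall_congr' fun h => ?_
      rw [c1 k h]
    · refine forall_congr' fun k => forall_congr' fun h => ?_
      rw [c1 k (by omega), c1 (k + 1) h]
  rw [L, Rr]
  constructor
  · rintro ⟨h1, h2⟩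
    have h0 := (h1 0 (by omega)).2.2.2
    refine ⟨by simpa using h0, ?_, ?_⟩
    · intro k hk
      rcases Nat.even_or_odd' k with ⟨i, rfl | rfl⟩
      · have := h1 i (by omega)
        have := h2 i (by omega)
        constructor <;> linarith
      · have := h1 (i + 1) (by omega)
        have := h2 (i + 1) (by omega)
        rw [show 2 * i + 1 + 1 = 2 * (i + 1) by ring]
        constructor <;> linarith
    · intro k hk
      rcases Nat.even_or_odd' k with ⟨i, rfl | rfl⟩
      · refine ⟨fun _ => ?_, fun h => absurd h (by simp)⟩
        have := (h1 i (by omega)).2.2.1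
        rwa [if_neg (by omega)] at this
      · refine ⟨fun h => absurd h (by simp), fun _ => ?_⟩
        exact (h1 (i + 1) (by omega)).2.1
  · rintro ⟨h1, h2, h3⟩
    have hle : ∀ i, i < n + 1 → W' (2 * i) ≤ W' 0 := by
      intro i hi
      rcases Nat.eq_zero_or_pos i with rfl | hpos
      · simp
      · obtain ⟨j, rfl⟩ : ∃ j, i = j + 1 := ⟨i - 1, by omega⟩
        exact (h2 (2 * j + 1) (by omega)).2
    refine ⟨fun i hi => ⟨(h2 (2 * i) (by omega)).1, ?_, ?_, (hle i hi).trans h1⟩, hle⟩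
    · rcases Nat.eq_zero_or_pos i with rfl | hpos
      · exact (h2 0 (by omega)).2
      · obtain ⟨j, rfl⟩ : ∃ j, i = j + 1 := ⟨i - 1, by omega⟩
        exact (h3 (2 * j + 1) (by omega)).2 (by simp)
    · split_ifs with h
      · exact (h2 (2 * i) (by omega)).2
      · exact (h3 (2 * i) (by omega)).1 (by simp)

lemma bqQ_vol_final (n : ℕ) : volume (bqQ n) =
    ENNReal.ofReal ((1 / 2) ^ (n + 1)) * ((n + 1 : ℕ) * (ENNReal.ofReal (1 / ((2 * n + 1 : ℕ) + 1 : ℝ)) *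
      ((eulerNumber (2 * n + 1) : ENNReal) * (Nat.factorial (2 * n + 1) : ENNReal)⁻¹))) := by
  rw [bqQ_vol, bqR_rot, bqR0_vol, bqT_vol _ (by omega), bqZZ_vol]

lemma bqP_meas (n : ℕ) : MeasurableSet (bqP n) := by
  have : bqP n = bqQ n ∩ ⋂ s : Fin (n + 1) → Bool,
      {p | bqZs s p (Fin.last n) ≤ ∑ i : Fin n, bqZs s p i.castSucc} := by
    ext p
    simp [bqP]
  rw [this]
  exact (bqQ_meas n).inter (MeasurableSet.iInter fun s => measurableSet_le (bqZs_meas s _)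
    (Finset.measurable_sum _ fun i _ => bqZs_meas s _))

/-- `vol P(C_m) = m * A_{2m-1} / (2^m * (2m)!) - 2^(m-2) / (2m)!`. -/
theorem volume_BQPSet_cycle (m : ℕ) (hm : 3 ≤ m) :
    volume (BQPSet (cycleG m)) =
      ((m * eulerNumber (2 * m - 1) : ℕ) : ENNReal) /
          ((2 : ENNReal) ^ m * (Nat.factorial (2 * m) : ENNReal)) -
        (2 : ENNReal) ^ (m - 2) / (Nat.factorial (2 * m) : ENNReal) := by
  obtain ⟨k, rfl⟩ : ∃ k, m = k + 2 + 1 := ⟨m - 3, by omega⟩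
  have hn : 2 ≤ k + 2 := by omega
  rw [bqBQP_eq (k + 2) hn, (bqPsi_mp (k + 2) hn).measure_preimage (bqP_meas _).nullMeasurableSet,
    bqV_total, bqQ_vol_final]
  have e1 : 2 * (k + 2 + 1) - 1 = 2 * (k + 2) + 1 := by omega
  have e2 : k + 2 + 1 - 2 = k + 1 := by omega
  rw [e1, e2]
  generalize eulerNumber (2 * (k + 2) + 1) = a
  have hf : (Nat.factorial (2 * (k + 2 + 1)) : ℝ) =
      (2 * (k + 2) + 2) * (Nat.factorial (2 * (k + 2) + 1) : ℝ) := by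
    have : 2 * (k + 2 + 1) = (2 * (k + 2) + 1) + 1 := by ring
    rw [this, Nat.factorial_succ]
    push_cast
    ring
  have p1 : (0 : ℝ) < Nat.factorial (2 * (k + 2 + 1)) := by exact_mod_cast Nat.factorial_pos _
  have p2 : (0 : ℝ) < Nat.factorial (2 * (k + 2) + 1) := by exact_mod_cast Nat.factorial_pos _
  have cast : ∀ j : ℕ, (j : ENNReal) = ENNReal.ofReal j := fun j => by simp
  have two : ∀ j : ℕ, (2 : ENNReal) ^ j = ENNReal.ofReal (2 ^ j) := fun j => by
    rw [ENNReal.ofReal_pow (by norm_num)]; simp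
  congr 1
  · rw [cast a, cast (Nat.factorial _), cast (Nat.factorial _), cast (_ * _), cast (_ + _), two,
      ← ENNReal.ofReal_inv_of_pos p2, ← ENNReal.ofReal_mul (by positivity),
      ← ENNReal.ofReal_mul (by positivity), ← ENNReal.ofReal_mul (by positivity),
      ← ENNReal.ofReal_mul (by positivity), ← ENNReal.ofReal_mul (by positivity),
      ← ENNReal.ofReal_div_of_pos (by positivity), hf]
    congr 1
    push_cast
    rw [div_pow, one_pow]
    field_simp
    ring
  · rw [two, two, cast (Nat.factorial _), ← ENNReal.ofReal_mul (by positivity),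
      ← ENNReal.ofReal_mul (by positivity), ← ENNReal.ofReal_div_of_pos (by positivity)]
    congr 1
    rw [pow_succ 2 (k + 1)]
    field_simp
end
end
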